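/- arXiv:1202.0706 — 7 statements merged into one kernel-verified Lean document; each statement's English description precedes it below -/
import Mathlib

section
/- Let φ : (0,∞) → (0,∞) be increasing and differentiable with φ' nonnegative and decreasing and φ(λ) = ∫₀^λ φ'(s) ds for all λ > 0. Suppose there exist constants σ > 0, λ₀ > 0 and δ ∈ (0,1] such that φ'(λx) ≤ σ x^{−δ} φ'(λ) for all x ≥ 1 and all λ ≥ λ₀. Then for every ε > 0 there exists a constant c = c(ε) > 0 such that φ(λx) ≤ c · x^{1−δ+ε} · φ(λ) for all λ ≥ λ₀ and all x ≥ 1. -/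
open MeasureTheory Real Set

/-!
A nonnegative function that is concave on `(0, ∞)` lies above the line through the origin with its
tangent slope, so `l * φ' l ≤ φ l`. Integrating the decay of `φ'` from `l` to `l * x` then gives
`φ (l * x) ≤ (1 + σ ∫₁ˣ t ^ (-δ) dt) * φ l`. The integral is logarithmic in `x` when `δ = 1`, which
is what the loss of `ε` in the exponent pays for; for `δ < 1` no loss is needed.
-/

lemma concaveOn_of_hasDerivAt_of_antitoneOn {s : Set ℝ} {f f' : ℝ → ℝ} (hs : Convex ℝ s)
    (hs_open : IsOpen s) (hderiv : ∀ t ∈ s, HasDerivAt f (f' t) t) (hanti : AntitoneOn f' s) :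
    ConcaveOn ℝ s f := by
  refine AntitoneOn.concaveOn_of_deriv hs
    (fun t ht ↦ (hderiv t ht).continuousAt.continuousWithinAt) ?_ ?_ <;> rw [hs_open.interior_eq]
  · exact fun t ht ↦ (hderiv t ht).differentiableAt.differentiableWithinAt
  · exact hanti.congr fun t ht ↦ (hderiv t ht).deriv.symm

open Filter Topology in
lemma sub_mul_le_of_concaveOn_Ioi_of_nonneg {f : ℝ → ℝ} {a m t : ℝ} (hf : ConcaveOn ℝ (Ioi a) f)
    (hnonneg : ∀ s ∈ Ioi a, 0 ≤ f s) (ht : a < t) (hderiv : HasDerivAt f m t) :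
    (t - a) * m ≤ f t := by
  have hchord : ∀ s ∈ Ioo a t, (t - s) * m ≤ f t := fun s hs ↦ by
    have hslope := hf.le_slope_of_hasDerivAt hs.1 ht hs.2 hderiv
    rw [slope_def_field, le_div_iff₀' (sub_pos.2 hs.2)] at hslope
    exact hslope.trans (sub_le_self _ (hnonneg s hs.1))
  have hlim : Tendsto (fun s ↦ (t - s) * m) (𝓝[>] a) (𝓝 ((t - a) * m)) :=
    (Continuous.tendsto (by fun_prop) a).mono_left nhdsWithin_le_nhds
  exact le_of_tendsto hlim (mem_of_superset (Ioo_mem_nhdsGT ht) hchord)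

lemma image_mul_le_one_add_integral_mul {f f' w : ℝ → ℝ} {l x : ℝ} (hl : 0 < l) (hx : 1 ≤ x)
    (hderiv : ∀ t, l ≤ t → HasDerivAt f (f' t) t) (htangent : l * f' l ≤ f l)
    (hw : IntegrableOn w (Icc 1 x)) (hw_nonneg : ∀ t ∈ Ioo 1 x, 0 ≤ w t)
    (hdecay : ∀ t ∈ Ioo 1 x, f' (l * t) ≤ w t * f' l) :
    f (l * x) ≤ (1 + ∫ t in (1 : ℝ)..x, w t) * f l := by
  have hderiv_dilate : ∀ t, 1 ≤ t → HasDerivAt (fun t ↦ f (l * t)) (l * f' (l * t)) t :=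
    fun t ht ↦ (hderiv _ (le_mul_of_one_le_right hl.le ht)).scomp t (hasDerivAt_const_mul l)
  have hderiv_le : ∀ t ∈ Ioo 1 x, l * f' (l * t) ≤ w t * f l := fun t ht ↦ calc
    l * f' (l * t) ≤ l * (w t * f' l) := by gcongr; exact hdecay t ht
    _ = w t * (l * f' l) := by ring
    _ ≤ w t * f l := by gcongr; exact hw_nonneg t ht
  have hincrement := intervalIntegral.sub_le_integral_of_hasDeriv_right_of_le hx
    (fun t ht ↦ (hderiv_dilate t ht.1).continuousAt.continuousWithinAt)
    (fun t ht ↦ (hderiv_dilate t ht.1.le).hasDerivWithinAt) (hw.mul_const (f l)) hderiv_le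
  rw [intervalIntegral.integral_mul_const, mul_one] at hincrement
  linarith

lemma intervalIntegrable_rpow_of_pos {μ : Measure ℝ} [IsLocallyFiniteMeasure μ] {a b r : ℝ}
    (ha : 0 < a) (hb : 0 < b) : IntervalIntegrable (fun t : ℝ ↦ t ^ r) μ a b :=
  intervalIntegral.intervalIntegrable_rpow (Or.inr (notMem_uIcc_of_lt ha hb))

lemma integral_one_rpow_le {r p x : ℝ} (hp : 0 < p) (hrp : r + 1 ≤ p) (hx : 1 ≤ x) :
    ∫ t in (1 : ℝ)..x, t ^ r ≤ (x ^ p - 1) / p := by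
  have hx_pos : 0 < x := one_pos.trans_le hx
  calc ∫ t in (1 : ℝ)..x, t ^ r ≤ ∫ t in (1 : ℝ)..x, t ^ (p - 1) :=
        intervalIntegral.integral_mono_on hx (intervalIntegrable_rpow_of_pos one_pos hx_pos)
          (intervalIntegrable_rpow_of_pos one_pos hx_pos)
          fun t ht ↦ rpow_le_rpow_of_exponent_le ht.1 (by linarith)
    _ = (x ^ p - 1) / p := by
      rw [integral_rpow (Or.inl (by linarith)), sub_add_cancel, one_rpow]

theorem stmt_1_general {φ φ' : ℝ → ℝ} {σ l δ p x : ℝ}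
    (hφ_nonneg : ∀ t ∈ Ioi (0 : ℝ), 0 ≤ φ t)
    (hderiv : ∀ t ∈ Ioi (0 : ℝ), HasDerivAt φ (φ' t) t) (hanti : AntitoneOn φ' (Ioi 0))
    (hσ : 0 ≤ σ) (hl : 0 < l) (hp : 0 < p) (hδp : 1 - δ ≤ p)
    (hdecay : ∀ t, 1 ≤ t → φ' (l * t) ≤ σ * t ^ (-δ) * φ' l) (hx : 1 ≤ x) :
    φ (l * x) ≤ (1 + σ / p) * x ^ p * φ l := by
  have hconcave : ConcaveOn ℝ (Ioi 0) φ :=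
    concaveOn_of_hasDerivAt_of_antitoneOn (convex_Ioi 0) isOpen_Ioi hderiv hanti
  have htangent : l * φ' l ≤ φ l := by
    simpa only [sub_zero] using
      sub_mul_le_of_concaveOn_Ioi_of_nonneg hconcave hφ_nonneg hl (hderiv l hl)
  have hgrowth : φ (l * x) ≤ (1 + ∫ t in (1 : ℝ)..x, σ * t ^ (-δ)) * φ l :=
    image_mul_le_one_add_integral_mul hl hx (fun t ht ↦ hderiv t (hl.trans_le ht)) htangent
      ((intervalIntegrable_iff_integrableOn_Icc_of_le hx).1
        ((intervalIntegrable_rpow_of_pos one_pos (one_pos.trans_le hx)).const_mul σ))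
      (fun t ht ↦ mul_nonneg hσ (rpow_nonneg (zero_le_one.trans ht.1.le) _))
      fun t ht ↦ hdecay t ht.1.le
  have hconst : 1 + ∫ t in (1 : ℝ)..x, σ * t ^ (-δ) ≤ (1 + σ / p) * x ^ p := by
    rw [intervalIntegral.integral_const_mul]
    calc 1 + σ * ∫ t in (1 : ℝ)..x, t ^ (-δ) ≤ 1 + σ * ((x ^ p - 1) / p) := by
          gcongr; exact integral_one_rpow_le hp (by linarith) hx
      _ = 1 + σ / p * x ^ p - σ / p := by ring
      _ ≤ x ^ p + σ / p * x ^ p := by linarith [one_le_rpow hx hp.le, div_nonneg hσ hp.le]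
      _ = (1 + σ / p) * x ^ p := by ring
  exact hgrowth.trans (mul_le_mul_of_nonneg_right hconst (hφ_nonneg l hl))

/-- If `φ : (0,∞) → (0,∞)` is increasing and differentiable with
`φ'` nonnegative and decreasing, `φ(λ) = ∫₀^λ φ'(s) ds`, and condition (A-3)
holds with constants `σ > 0`, `λ₀ > 0`, `δ ∈ (0,1]`, then for every `ε > 0`
there is `c > 0` with `φ(λx) ≤ c x^{1-δ+ε} φ(λ)` for all `λ ≥ λ₀`, `x ≥ 1`. -/
theorem stmt_1 (φ φ' : ℝ → ℝ) (σ lam₀ δ : ℝ)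
    (hφpos : ∀ l : ℝ, 0 < l → 0 < φ l)
    (hφmono : ∀ s t : ℝ, 0 < s → s ≤ t → φ s ≤ φ t)
    (hderiv : ∀ l : ℝ, 0 < l → HasDerivAt φ (φ' l) l)
    (hφ'nonneg : ∀ l : ℝ, 0 < l → 0 ≤ φ' l)
    (hφ'dec : ∀ s t : ℝ, 0 < s → s ≤ t → φ' t ≤ φ' s)
    (hrep : ∀ l : ℝ, 0 < l → φ l = ∫ s in (0:ℝ)..l, φ' s)
    (hσ : 0 < σ) (hlam₀ : 0 < lam₀) (hδ0 : 0 < δ) (hδ1 : δ ≤ 1)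
    (hA3 : ∀ x : ℝ, 1 ≤ x → ∀ l : ℝ, lam₀ ≤ l →
      φ' (l * x) ≤ σ * x ^ (-δ) * φ' l) :
    ∀ ε : ℝ, 0 < ε → ∃ c : ℝ, 0 < c ∧ ∀ l : ℝ, lam₀ ≤ l → ∀ x : ℝ, 1 ≤ x →
      φ (l * x) ≤ c * x ^ (1 - δ + ε) * φ l := by
  intro ε hε
  have hp : 0 < 1 - δ + ε := by linarith
  exact ⟨1 + σ / (1 - δ + ε), by positivity, fun l hl x hx ↦
    stmt_1_general (fun t ht ↦ (hφpos t ht).le) hderiv (fun s hs t _ hst ↦ hφ'dec s t hs hst)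
      hσ.le (hlam₀.trans_le hl) hp (by linarith) (fun t ht ↦ hA3 t ht l hl) hx⟩
end

section
/- Let φ : (0,∞) → (0,∞) be differentiable and suppose there exist constants σ ≥ 2, λ₀ > 0 and δ ∈ (0,1] such that φ'(λx) ≤ σ x^{−δ} φ'(λ) for all x ≥ 1 and all λ ≥ λ₀. Then for every ε > 0, every λ ≥ λ₀ and every integer k ≥ 2, one has φ(λ σ^{k/ε}) − φ(λ σ^{(k−1)/ε}) ≤ σ^{(k−1)(1 + (1−δ)/ε)} · (φ(λ σ^{1/ε}) − φ(λ)). -/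
open MeasureTheory Real Set

/-!
Put `s = σ ^ ((k - 1) / ε)`. The left-hand side is the increment of `φ` over the dilation by `s` of
`[l, l * σ ^ (1 / ε)]`. Comparing the derivative `φ' (t * s) * s` of the dilated function with
`φ' t` bounds this increment by `σ * s ^ (1 - δ)` times the increment `Δ` of `φ` over the original
interval. Dilating by `1` instead gives `Δ ≤ σ * Δ`, so powers of `σ` multiplying `Δ` may be
replaced by higher ones; as `1 ≤ k - 1`, this applies to
`σ * s ^ (1 - δ) = σ ^ (1 + (k - 1) * (1 - δ) / ε)`.
-/

theorem sub_le_sub_of_hasDerivAt_le {f f' g g' : ℝ → ℝ} {a b : ℝ} (hab : a ≤ b)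
    (hf : ∀ t ∈ Icc a b, HasDerivAt f (f' t) t) (hg : ∀ t ∈ Icc a b, HasDerivAt g (g' t) t)
    (hle : ∀ t ∈ Icc a b, f' t ≤ g' t) : f b - f a ≤ g b - g a := by
  have hderiv : ∀ t ∈ Icc a b, HasDerivAt (g - f) (g' t - f' t) t :=
    fun t ht ↦ (hg t ht).sub (hf t ht)
  have hmono : MonotoneOn (g - f) (Icc a b) :=
    monotoneOn_of_hasDerivWithinAt_nonneg (convex_Icc a b)
      (fun t ht ↦ (hderiv t ht).continuousAt.continuousWithinAt)
      (fun t ht ↦ (hderiv t (interior_subset ht)).hasDerivWithinAt)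
      (fun t ht ↦ sub_nonneg.2 (hle t (interior_subset ht)))
  have hends : g a - f a ≤ g b - f b :=
    hmono (left_mem_Icc.2 hab) (right_mem_Icc.2 hab) hab
  linarith

theorem sub_mul_right_le_of_hasDerivAt_mul_right_le {φ φ' : ℝ → ℝ} {C s a b : ℝ}
    (hs : 0 ≤ s) (hab : a ≤ b) (hφ : ∀ t ∈ Icc a b, HasDerivAt φ (φ' t) t)
    (hφs : ∀ t ∈ Icc a b, HasDerivAt φ (φ' (t * s)) (t * s))
    (hle : ∀ t ∈ Icc a b, φ' (t * s) ≤ C * φ' t) :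
    φ (b * s) - φ (a * s) ≤ C * s * (φ b - φ a) := by
  have hbound : ∀ t ∈ Icc a b, φ' (t * s) * s ≤ C * s * φ' t := fun t ht ↦
    calc φ' (t * s) * s ≤ C * φ' t * s := mul_le_mul_of_nonneg_right (hle t ht) hs
      _ = C * s * φ' t := mul_right_comm ..
  rw [mul_sub]
  exact sub_le_sub_of_hasDerivAt_le hab
    (fun t ht ↦ (hφs t ht).comp t (hasDerivAt_mul_const s))
    (fun t ht ↦ (hφ t ht).const_mul (C * s)) hbound

theorem sub_mul_right_le_rpow_mul_of_hasDerivAt {φ φ' : ℝ → ℝ} {σ δ s a b : ℝ}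
    (ha : 0 ≤ a) (hab : a ≤ b) (hs : 1 ≤ s) (hderiv : ∀ t, a ≤ t → HasDerivAt φ (φ' t) t)
    (hle : ∀ t ∈ Icc a b, φ' (t * s) ≤ σ * s ^ (-δ) * φ' t) :
    φ (b * s) - φ (a * s) ≤ σ * s ^ (1 - δ) * (φ b - φ a) := by
  have hs0 : 0 < s := one_pos.trans_le hs
  have hdilated : ∀ t, a ≤ t → a ≤ t * s :=
    fun t ht ↦ ht.trans (le_mul_of_one_le_right (ha.trans ht) hs)
  have hfactor : σ * s ^ (1 - δ) = σ * s ^ (-δ) * s := by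
    rw [sub_eq_neg_add, rpow_add_one hs0.ne', mul_assoc]
  rw [hfactor]
  exact sub_mul_right_le_of_hasDerivAt_mul_right_le hs0.le hab (fun t ht ↦ hderiv t ht.1)
    (fun t ht ↦ hderiv _ (hdilated t ht.1)) hle

theorem rpow_mul_le_rpow_mul_of_le_mul {σ x p q : ℝ} (hσ : 1 ≤ σ) (hx : x ≤ σ * x)
    (hpq : p ≤ q) : σ ^ p * x ≤ σ ^ q * x := by
  rcases hσ.eq_or_lt with rfl | hσ_lt
  · simp
  · have hx0 : 0 ≤ x := by nlinarith
    exact mul_le_mul_of_nonneg_right (rpow_le_rpow_of_exponent_le hσ hpq) hx0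

theorem stmt_2_general {φ φ' : ℝ → ℝ} {σ lam₀ δ ε l k : ℝ}
    (hderiv : ∀ t, lam₀ ≤ t → HasDerivAt φ (φ' t) t) (hσ : 1 ≤ σ) (hlam₀ : 0 ≤ lam₀)
    (hA3 : ∀ x, 1 ≤ x → ∀ t, lam₀ ≤ t → φ' (t * x) ≤ σ * x ^ (-δ) * φ' t)
    (hε : 0 < ε) (hl : lam₀ ≤ l) (hk : 2 ≤ k) :
    φ (l * σ ^ (k / ε)) - φ (l * σ ^ ((k - 1) / ε)) ≤
      σ ^ ((k - 1) * (1 + (1 - δ) / ε)) * (φ (l * σ ^ (1 / ε)) - φ l) := by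
  have hσ0 : 0 < σ := one_pos.trans_le hσ
  set s := σ ^ ((k - 1) / ε) with hs_def
  set r := l * σ ^ (1 / ε) with hr_def
  have hlr : l ≤ r :=
    le_mul_of_one_le_right (hlam₀.trans hl) (one_le_rpow hσ (by positivity))
  have hdil : ∀ x, 1 ≤ x → φ (r * x) - φ (l * x) ≤ σ * x ^ (1 - δ) * (φ r - φ l) := fun x hx ↦
    sub_mul_right_le_rpow_mul_of_hasDerivAt (hlam₀.trans hl) hlr hx
      (fun t ht ↦ hderiv t (hl.trans ht)) (fun t ht ↦ hA3 x hx t (hl.trans ht.1))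
  have hself : φ r - φ l ≤ σ * (φ r - φ l) := by simpa using hdil 1 le_rfl
  have hs : 1 ≤ s := one_le_rpow hσ (div_nonneg (by linarith) hε.le)
  have hrs : l * σ ^ (k / ε) = r * s := by
    rw [hr_def, hs_def, mul_assoc, ← rpow_add hσ0]
    ring_nf
  have hfactor : σ * s ^ (1 - δ) = σ ^ (1 + (k - 1) / ε * (1 - δ)) := by
    rw [hs_def, ← rpow_mul hσ0.le, rpow_add hσ0, rpow_one]
  have hexp : 1 + (k - 1) / ε * (1 - δ) ≤ (k - 1) * (1 + (1 - δ) / ε) :=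
    calc 1 + (k - 1) / ε * (1 - δ) ≤ (k - 1) + (k - 1) / ε * (1 - δ) := by linarith
      _ = (k - 1) * (1 + (1 - δ) / ε) := by ring
  calc φ (l * σ ^ (k / ε)) - φ (l * s)
      = φ (r * s) - φ (l * s) := by rw [hrs]
    _ ≤ σ * s ^ (1 - δ) * (φ r - φ l) := hdil s hs
    _ = σ ^ (1 + (k - 1) / ε * (1 - δ)) * (φ r - φ l) := by rw [hfactor]
    _ ≤ σ ^ ((k - 1) * (1 + (1 - δ) / ε)) * (φ r - φ l) :=
      rpow_mul_le_rpow_mul_of_le_mul hσ hself hexp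

/-- Under condition (A-3) with `σ ≥ 2`, `λ₀ > 0`, `δ ∈ (0,1]`,
for every `ε > 0`, `λ ≥ λ₀` and integer `k ≥ 2`,
`φ(λ σ^{k/ε}) − φ(λ σ^{(k−1)/ε}) ≤ σ^{(k−1)(1+(1−δ)/ε)} (φ(λ σ^{1/ε}) − φ(λ))`. -/
theorem stmt_2 (φ φ' : ℝ → ℝ) (σ lam₀ δ : ℝ)
    (hφpos : ∀ l : ℝ, 0 < l → 0 < φ l)
    (hderiv : ∀ l : ℝ, 0 < l → HasDerivAt φ (φ' l) l)
    (hσ : 2 ≤ σ) (hlam₀ : 0 < lam₀) (hδ0 : 0 < δ) (hδ1 : δ ≤ 1)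
    (hA3 : ∀ x : ℝ, 1 ≤ x → ∀ l : ℝ, lam₀ ≤ l →
      φ' (l * x) ≤ σ * x ^ (-δ) * φ' l) :
    ∀ ε : ℝ, 0 < ε → ∀ l : ℝ, lam₀ ≤ l → ∀ k : ℕ, 2 ≤ k →
      φ (l * σ ^ ((k : ℝ) / ε)) - φ (l * σ ^ (((k : ℝ) - 1) / ε))
        ≤ σ ^ (((k : ℝ) - 1) * (1 + (1 - δ) / ε)) *
            (φ (l * σ ^ (1 / ε)) - φ l) :=
  fun _ hε _ hl _ hk ↦
    stmt_2_general (fun t ht ↦ hderiv t (hlam₀.trans_le ht)) (one_le_two.trans hσ) hlam₀.le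
      hA3 hε hl (by exact_mod_cast hk)
end

section
/- Let μ : (0,∞) → (0,∞) be decreasing with ∫₀^∞ (1 ∧ t) μ(t) dt < ∞, and define φ(λ) = ∫₀^∞ (1 − e^{−λt}) μ(t) dt for λ > 0, so that φ is differentiable with φ'(λ) = ∫₀^∞ t e^{−λt} μ(t) dt positive and decreasing. Suppose there exist constants σ > 0, λ₀ > 0 and δ ∈ (0,1] such that φ'(λx) ≤ σ x^{−δ} φ'(λ) for all x ≥ 1 and λ ≥ λ₀. Then there exist constants c₁, c₂ > 0 such that c₁ t^{−2} φ'(t^{−1}) ≤ μ(t) ≤ c₂ t^{−2} φ'(t^{−1}) for all 0 < t ≤ 1/λ₀; in particular μ(t) ≍ t^{−2} φ'(t^{−1}) as t → 0+. -/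
open MeasureTheory Real Set

/-!
Write `F = φ'`. Since `μ` is decreasing, the part of `F (1/t)` coming from `(0, t)` is at least
`e⁻¹ μ(t) t² / 2`, which is the upper bound for `μ`.

For the lower bound, compare `F` at two frequencies `m ≤ l`. On `(0, t)` one has
`e^{-ms} ≤ e^{(l-m)t} e^{-ls}`, and on `(t, ∞)` one has `μ ≤ μ(t)`, so
`F m ≤ e^{(l-m)t} F l + μ(t) / m²`. Take `l = 1/t` and `m = l/x`. Condition (A-3) with `x` large
makes the first term at most `F m / 2`, hence `F l ≤ F m ≤ 2 x² t² μ(t)`. This requires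
`m ≥ λ₀`, that is `t ≤ 1/(x λ₀)`; on the remaining interval `[1/(x λ₀), 1/λ₀]` monotonicity alone
gives a positive constant.
-/

/-- A Lévy density near `0` in the wide sense: a nonnegative decreasing function on `(0, ∞)` for
which `t μ(t)` is integrable at `0`. No integrability of `μ` at infinity is asked for, so the
Laplace exponent itself may be infinite, but its formal derivative `laplaceDeriv μ` is finite. -/
structure IsDecreasingDensity (μ : ℝ → ℝ) : Prop where
  nonneg : ∀ t, 0 < t → 0 ≤ μ t
  antitoneOn : AntitoneOn μ (Ioi 0)
  integrableOn : IntegrableOn (fun t => t * μ t) (Ioc 0 1)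

/-- The derivative `φ'(l) = ∫₀^∞ t e^{-lt} μ(t) dt` of the Laplace exponent with Lévy density `μ`,
taken as the integral itself. -/
noncomputable def laplaceDeriv (μ : ℝ → ℝ) (l : ℝ) : ℝ :=
  ∫ t in Ioi (0 : ℝ), t * exp (-(l * t)) * μ t

theorem integral_id_mul_exp_neg_mul_Ioi {m : ℝ} (hm : 0 < m) :
    ∫ s in Ioi (0 : ℝ), s * exp (-(m * s)) = (m ^ 2)⁻¹ := by
  have h := integral_rpow_mul_exp_neg_mul_Ioi two_pos hm
  have hexponent : (2 : ℝ) - 1 = 1 := by norm_num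
  simpa only [hexponent, rpow_one, Gamma_two, mul_one, rpow_two, one_div, inv_pow] using h

theorem integrableOn_id_mul_exp_neg_mul_Ioi {m : ℝ} (hm : 0 < m) :
    IntegrableOn (fun s => s * exp (-(m * s))) (Ioi 0) := by
  simpa only [rpow_one, neg_mul] using
    integrableOn_rpow_mul_exp_neg_mul_rpow (s := 1) (by norm_num) one_pos hm

theorem exists_one_le_and_mul_rpow_neg_le {δ : ℝ} (hδ : 0 < δ) (C : ℝ) {ε : ℝ} (hε : 0 < ε) :
    ∃ x : ℝ, 1 ≤ x ∧ C * x ^ (-δ) ≤ ε := by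
  have hlim := (tendsto_rpow_neg_atTop hδ).const_mul C
  rw [mul_zero] at hlim
  exact ((Filter.eventually_ge_atTop 1).and (hlim.eventually_le_const hε)).exists

theorem integrableOn_id_mul_of_min_one_mul {μ : ℝ → ℝ}
    (h : IntegrableOn (fun t => min 1 t * μ t) (Ioi 0)) :
    IntegrableOn (fun t => t * μ t) (Ioc 0 1) :=
  (h.mono_set Ioc_subset_Ioi_self).congr_fun
    (fun t ht => by simp only [min_eq_right ht.2]) measurableSet_Ioc

namespace IsDecreasingDensity

variable {μ : ℝ → ℝ} {l m t : ℝ}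

theorem integrableOn_id_mul_exp_neg_mul (hμ : IsDecreasingDensity μ) (hl : 0 < l) :
    IntegrableOn (fun s => s * exp (-(l * s)) * μ s) (Ioi 0) := by
  rw [← Ioc_union_Ioi_eq_Ioi zero_le_one, integrableOn_union]
  have hcont : Continuous fun s : ℝ => exp (-(l * s)) := by fun_prop
  constructor
  · have hbound : ∀ᵐ s ∂volume.restrict (Ioc (0 : ℝ) 1), ‖exp (-(l * s))‖ ≤ 1 :=
      (ae_restrict_mem measurableSet_Ioc).mono fun s hs => by
        rw [norm_of_nonneg (exp_pos _).le, exp_le_one_iff, neg_nonpos]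
        exact mul_nonneg hl.le hs.1.le
    exact (hμ.integrableOn.bdd_mul hcont.aestronglyMeasurable hbound).congr
      (.of_forall fun s => by ring)
  · have hsub : Ioi (1 : ℝ) ⊆ Ioi 0 := Ioi_subset_Ioi zero_le_one
    have hmeas : AEStronglyMeasurable μ (volume.restrict (Ioi 1)) :=
      (aemeasurable_restrict_of_antitoneOn measurableSet_Ioi
        (hμ.antitoneOn.mono hsub)).aestronglyMeasurable
    have hbound : ∀ᵐ s ∂volume.restrict (Ioi (1 : ℝ)), ‖μ s‖ ≤ μ 1 :=
      (ae_restrict_mem measurableSet_Ioi).mono fun s hs => by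
        rw [norm_of_nonneg (hμ.nonneg s (hsub hs))]
        exact hμ.antitoneOn (mem_Ioi.2 one_pos) (hsub hs) (le_of_lt hs)
    exact ((integrableOn_id_mul_exp_neg_mul_Ioi hl).mono_set hsub).mul_bdd hmeas hbound

theorem antitoneOn_laplaceDeriv (hμ : IsDecreasingDensity μ) :
    AntitoneOn (laplaceDeriv μ) (Ioi 0) := fun m hm l hl hml =>
  setIntegral_mono_on (hμ.integrableOn_id_mul_exp_neg_mul hl)
    (hμ.integrableOn_id_mul_exp_neg_mul hm) measurableSet_Ioi fun s hs => by
      have hs₀ : 0 < s := hs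
      have hμs := hμ.nonneg s hs
      gcongr

theorem sq_div_two_mul_exp_neg_mul_le_laplaceDeriv (hμ : IsDecreasingDensity μ) (hl : 0 < l)
    (ht : 0 < t) : t ^ 2 / 2 * (exp (-(l * t)) * μ t) ≤ laplaceDeriv μ l := by
  have hint := hμ.integrableOn_id_mul_exp_neg_mul hl
  have hsub : Ioc 0 t ⊆ Ioi 0 := Ioc_subset_Ioi_self
  calc t ^ 2 / 2 * (exp (-(l * t)) * μ t)
      = ∫ s in Ioc 0 t, s * (exp (-(l * t)) * μ t) := by
        rw [integral_mul_const, ← intervalIntegral.integral_of_le ht.le, integral_id]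
        ring
    _ ≤ ∫ s in Ioc 0 t, s * exp (-(l * s)) * μ s := by
        refine setIntegral_mono_on (Continuous.integrableOn_Ioc (by fun_prop))
          (hint.mono_set hsub) measurableSet_Ioc fun s ⟨hs₀, hst⟩ => ?_
        have hμt := hμ.nonneg t ht
        have hμts := hμ.antitoneOn hs₀ ht hst
        rw [mul_assoc]
        gcongr
    _ ≤ laplaceDeriv μ l := by
        refine setIntegral_mono_set hint ?_ hsub.eventuallyLE
        exact (ae_restrict_mem measurableSet_Ioi).mono fun s hs =>
          mul_nonneg (mul_nonneg (le_of_lt hs) (exp_pos _).le) (hμ.nonneg s hs)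

theorem laplaceDeriv_nonneg (hμ : IsDecreasingDensity μ) : 0 ≤ laplaceDeriv μ l :=
  setIntegral_nonneg measurableSet_Ioi fun s hs =>
    mul_nonneg (mul_nonneg (le_of_lt hs) (exp_pos _).le) (hμ.nonneg s hs)

theorem laplaceDeriv_pos (hμ : IsDecreasingDensity μ) (hl : 0 < l) (ht : 0 < t)
    (hμt : 0 < μ t) : 0 < laplaceDeriv μ l :=
  lt_of_lt_of_le (by positivity) (hμ.sq_div_two_mul_exp_neg_mul_le_laplaceDeriv hl ht)

theorem le_inv_sq_mul_laplaceDeriv_inv (hμ : IsDecreasingDensity μ) (ht : 0 < t) :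
    μ t ≤ 2 * exp 1 * (t ^ 2)⁻¹ * laplaceDeriv μ t⁻¹ := by
  have h := hμ.sq_div_two_mul_exp_neg_mul_le_laplaceDeriv (inv_pos.2 ht) ht
  rw [inv_mul_cancel₀ ht.ne', exp_neg] at h
  calc μ t = 2 * exp 1 * (t ^ 2)⁻¹ * (t ^ 2 / 2 * ((exp 1)⁻¹ * μ t)) := by field_simp
    _ ≤ 2 * exp 1 * (t ^ 2)⁻¹ * laplaceDeriv μ t⁻¹ := by gcongr

theorem laplaceDeriv_le_exp_mul_add (hμ : IsDecreasingDensity μ) (hm : 0 < m) (hml : m ≤ l)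
    (ht : 0 < t) :
    laplaceDeriv μ m ≤ exp ((l - m) * t) * laplaceDeriv μ l + (m ^ 2)⁻¹ * μ t := by
  have hl_int := (hμ.integrableOn_id_mul_exp_neg_mul (hm.trans_le hml)).const_mul
    (exp ((l - m) * t))
  have hm_int := (integrableOn_id_mul_exp_neg_mul_Ioi hm).mul_const (μ t)
  rw [← integral_id_mul_exp_neg_mul_Ioi hm, laplaceDeriv, laplaceDeriv, ← integral_const_mul,
    ← integral_mul_const, ← integral_add hl_int hm_int]
  refine setIntegral_mono_on (hμ.integrableOn_id_mul_exp_neg_mul hm) (hl_int.add hm_int)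
    measurableSet_Ioi fun s hs => ?_
  have hs₀ : 0 < s := hs
  have hμs := hμ.nonneg s hs
  have hμt := hμ.nonneg t ht
  rcases le_total s t with hst | hts
  · have hexp : exp (-(m * s)) ≤ exp ((l - m) * t) * exp (-(l * s)) := by
      rw [← exp_add, exp_le_exp]
      linarith [mul_le_mul_of_nonneg_left hst (sub_nonneg.2 hml)]
    calc s * exp (-(m * s)) * μ s
        ≤ s * (exp ((l - m) * t) * exp (-(l * s))) * μ s := by gcongr
      _ = exp ((l - m) * t) * (s * exp (-(l * s)) * μ s) := by ring
      _ ≤ _ := le_add_of_nonneg_right (by positivity)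
  · calc s * exp (-(m * s)) * μ s ≤ s * exp (-(m * s)) * μ t := by
          gcongr
          exact hμ.antitoneOn ht hs hts
      _ ≤ _ := le_add_of_nonneg_left (by positivity)

theorem laplaceDeriv_inv_le_of_exp_one_mul_le (hμ : IsDecreasingDensity μ) (ht : 0 < t)
    (hm : 0 < m) (hmt : m ≤ t⁻¹)
    (h : exp 1 * laplaceDeriv μ t⁻¹ ≤ 1 / 2 * laplaceDeriv μ m) :
    laplaceDeriv μ t⁻¹ ≤ 2 * ((m ^ 2)⁻¹ * μ t) := by
  have hexp : exp ((t⁻¹ - m) * t) ≤ exp 1 := by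
    rw [exp_le_exp, sub_mul, inv_mul_cancel₀ ht.ne', sub_le_self_iff]
    positivity
  have hsplit : laplaceDeriv μ m ≤ exp 1 * laplaceDeriv μ t⁻¹ + (m ^ 2)⁻¹ * μ t :=
    (hμ.laplaceDeriv_le_exp_mul_add hm hmt ht).trans <| by
      gcongr
      exact hμ.laplaceDeriv_nonneg
  have hanti := hμ.antitoneOn_laplaceDeriv hm (inv_pos.2 ht) hmt
  linarith

theorem exists_mul_laplaceDeriv_inv_le_of_mem_Icc (hμ : IsDecreasingDensity μ) {a b : ℝ}
    (ha : 0 < a) (hb : 0 < b) (hμb : 0 < μ b) :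
    ∃ c : ℝ, 0 < c ∧ ∀ t ∈ Icc a b, c * (t ^ 2)⁻¹ * laplaceDeriv μ t⁻¹ ≤ μ t := by
  have hF : 0 < laplaceDeriv μ b⁻¹ := hμ.laplaceDeriv_pos (inv_pos.2 hb) hb hμb
  refine ⟨a ^ 2 * μ b / laplaceDeriv μ b⁻¹, by positivity, fun t ⟨hat, htb⟩ => ?_⟩
  have ht : 0 < t := ha.trans_le hat
  have hFt₀ : 0 ≤ laplaceDeriv μ t⁻¹ := hμ.laplaceDeriv_nonneg
  have hFt : laplaceDeriv μ t⁻¹ ≤ laplaceDeriv μ b⁻¹ :=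
    hμ.antitoneOn_laplaceDeriv (inv_pos.2 hb) (inv_pos.2 ht) (inv_anti₀ ht htb)
  calc a ^ 2 * μ b / laplaceDeriv μ b⁻¹ * (t ^ 2)⁻¹ * laplaceDeriv μ t⁻¹
      ≤ a ^ 2 * μ b / laplaceDeriv μ b⁻¹ * (a ^ 2)⁻¹ * laplaceDeriv μ b⁻¹ := by gcongr
    _ = μ b := by rw [mul_right_comm, div_mul_cancel₀ _ hF.ne']; field_simp
    _ ≤ μ t := hμ.antitoneOn ht hb htb

theorem mul_laplaceDeriv_inv_le_of_exp_one_mul_le (hμ : IsDecreasingDensity μ) {x : ℝ}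
    (hx : 1 ≤ x) (ht : 0 < t)
    (h : exp 1 * laplaceDeriv μ t⁻¹ ≤ 1 / 2 * laplaceDeriv μ (t⁻¹ / x)) :
    1 / (2 * x ^ 2) * (t ^ 2)⁻¹ * laplaceDeriv μ t⁻¹ ≤ μ t := by
  calc 1 / (2 * x ^ 2) * (t ^ 2)⁻¹ * laplaceDeriv μ t⁻¹
      ≤ 1 / (2 * x ^ 2) * (t ^ 2)⁻¹ * (2 * (((t⁻¹ / x) ^ 2)⁻¹ * μ t)) := by
        gcongr
        exact hμ.laplaceDeriv_inv_le_of_exp_one_mul_le ht (by positivity)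
          (div_le_self (inv_pos.2 ht).le hx) h
    _ = μ t := by field_simp

theorem exists_mul_laplaceDeriv_inv_le (hμ : IsDecreasingDensity μ) {lam₀ x : ℝ}
    (hlam₀ : 0 < lam₀) (hμ₀ : 0 < μ (1 / lam₀)) (hx : 1 ≤ x)
    (hscale : ∀ l, lam₀ ≤ l → exp 1 * laplaceDeriv μ (l * x) ≤ 1 / 2 * laplaceDeriv μ l) :
    ∃ c : ℝ, 0 < c ∧
      ∀ t, 0 < t → t ≤ 1 / lam₀ → c * (t ^ 2)⁻¹ * laplaceDeriv μ t⁻¹ ≤ μ t := by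
  have hx₀ : 0 < x := one_pos.trans_le hx
  obtain ⟨c, hc, hmem⟩ := hμ.exists_mul_laplaceDeriv_inv_le_of_mem_Icc
    (a := 1 / (x * lam₀)) (by positivity) (by positivity) hμ₀
  refine ⟨min (1 / (2 * x ^ 2)) c, lt_min (by positivity) hc, fun t ht htl => ?_⟩
  have hF : 0 ≤ laplaceDeriv μ t⁻¹ := hμ.laplaceDeriv_nonneg
  rcases le_total t (1 / (x * lam₀)) with htx | hxt
  · have hlt : lam₀ ≤ t⁻¹ / x := by
      rw [one_div] at htx
      rw [le_div_iff₀ hx₀, mul_comm]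
      exact (le_inv_comm₀ ht (by positivity)).1 htx
    have hhalf := hscale (t⁻¹ / x) hlt
    rw [div_mul_cancel₀ _ hx₀.ne'] at hhalf
    refine le_trans ?_ (hμ.mul_laplaceDeriv_inv_le_of_exp_one_mul_le hx ht hhalf)
    gcongr
    exact min_le_left _ _
  · refine le_trans ?_ (hmem t ⟨hxt, htl⟩)
    gcongr
    exact min_le_right _ _

end IsDecreasingDensity

theorem stmt_3_general {μ φ' : ℝ → ℝ} {σ lam₀ δ : ℝ} (hμ : IsDecreasingDensity μ)
    (hφ' : ∀ l, 0 < l → φ' l = laplaceDeriv μ l) (hlam₀ : 0 < lam₀) (hμ₀ : 0 < μ (1 / lam₀))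
    (hδ : 0 < δ) (hA3 : ∀ x, 1 ≤ x → ∀ l, lam₀ ≤ l → φ' (l * x) ≤ σ * x ^ (-δ) * φ' l) :
    ∃ c₁ : ℝ, 0 < c₁ ∧ ∃ c₂ : ℝ, 0 < c₂ ∧
      ∀ t : ℝ, 0 < t → t ≤ 1 / lam₀ →
        c₁ * (t ^ 2)⁻¹ * φ' t⁻¹ ≤ μ t ∧ μ t ≤ c₂ * (t ^ 2)⁻¹ * φ' t⁻¹ := by
  obtain ⟨x, hx, hxσ⟩ :=
    exists_one_le_and_mul_rpow_neg_le hδ (exp 1 * σ) (one_half_pos (α := ℝ))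
  have hscale : ∀ l, lam₀ ≤ l → exp 1 * laplaceDeriv μ (l * x) ≤ 1 / 2 * laplaceDeriv μ l := by
    intro l hl
    have hl₀ : 0 < l := hlam₀.trans_le hl
    have hF : 0 ≤ laplaceDeriv μ l := hμ.laplaceDeriv_nonneg
    have hA3x := hA3 x hx l hl
    rw [hφ' l hl₀, hφ' (l * x) (by positivity)] at hA3x
    calc exp 1 * laplaceDeriv μ (l * x)
        ≤ exp 1 * (σ * x ^ (-δ) * laplaceDeriv μ l) := by gcongr
      _ = exp 1 * σ * x ^ (-δ) * laplaceDeriv μ l := by ring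
      _ ≤ 1 / 2 * laplaceDeriv μ l := by gcongr
  obtain ⟨c₁, hc₁, hlower⟩ := hμ.exists_mul_laplaceDeriv_inv_le hlam₀ hμ₀ hx hscale
  refine ⟨c₁, hc₁, 2 * exp 1, by positivity, fun t ht htl => ?_⟩
  rw [hφ' t⁻¹ (inv_pos.2 ht)]
  exact ⟨hlower t ht htl, hμ.le_inv_sq_mul_laplaceDeriv_inv ht⟩

/-- If `μ` is a decreasing Lévy density with
`∫₀^∞ (1 ∧ t) μ(t) dt < ∞`, `φ(λ) = ∫₀^∞ (1 − e^{−λt}) μ(t) dt` with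
`φ'(λ) = ∫₀^∞ t e^{−λt} μ(t) dt` positive and decreasing, and condition (A-3)
holds, then `μ(t) ≍ t^{−2} φ'(t^{−1})` for `0 < t ≤ 1/λ₀`. -/
theorem stmt_3 (μ φ φ' : ℝ → ℝ) (σ lam₀ δ : ℝ)
    (hμpos : ∀ t : ℝ, 0 < t → 0 < μ t)
    (hμdec : ∀ s t : ℝ, 0 < s → s ≤ t → μ t ≤ μ s)
    (hμint : IntegrableOn (fun t => min 1 t * μ t) (Ioi 0))
    (hφ : ∀ l : ℝ, 0 < l →
      φ l = ∫ t in Ioi (0:ℝ), (1 - Real.exp (-(l * t))) * μ t)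
    (hφ' : ∀ l : ℝ, 0 < l →
      φ' l = ∫ t in Ioi (0:ℝ), t * Real.exp (-(l * t)) * μ t)
    (hderiv : ∀ l : ℝ, 0 < l → HasDerivAt φ (φ' l) l)
    (hφ'pos : ∀ l : ℝ, 0 < l → 0 < φ' l)
    (hφ'dec : ∀ s t : ℝ, 0 < s → s ≤ t → φ' t ≤ φ' s)
    (hσ : 0 < σ) (hlam₀ : 0 < lam₀) (hδ0 : 0 < δ) (hδ1 : δ ≤ 1)
    (hA3 : ∀ x : ℝ, 1 ≤ x → ∀ l : ℝ, lam₀ ≤ l →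
      φ' (l * x) ≤ σ * x ^ (-δ) * φ' l) :
    ∃ c₁ : ℝ, 0 < c₁ ∧ ∃ c₂ : ℝ, 0 < c₂ ∧
      ∀ t : ℝ, 0 < t → t ≤ 1 / lam₀ →
        c₁ * (t ^ 2)⁻¹ * φ' t⁻¹ ≤ μ t ∧ μ t ≤ c₂ * (t ^ 2)⁻¹ * φ' t⁻¹ :=
  stmt_3_general
    ⟨fun t ht => (hμpos t ht).le, fun s hs t _ hst => hμdec s t hs hst,
      integrableOn_id_mul_of_min_one_mul hμint⟩
    hφ' hlam₀ (hμpos _ (one_div_pos.2 hlam₀)) hδ0 hA3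
end

section
/- Let φ : (0,∞) → (0,∞) be increasing and differentiable with derivative φ' positive and decreasing, and let u : (0,∞) → (0,∞) be a decreasing function such that ∫₀^∞ e^{−λt} u(t) dt = 1/φ(λ) for all λ > 0. Suppose there exist constants σ > 0, λ₀ > 0 and δ ∈ (0,1] such that φ'(λx) ≤ σ x^{−δ} φ'(λ) for all x ≥ 1 and λ ≥ λ₀. Then there exist constants c₁, c₂ > 0 such that c₁ t^{−2} φ'(t^{−1})/φ(t^{−1})² ≤ u(t) ≤ c₂ t^{−2} φ'(t^{−1})/φ(t^{−1})² for all 0 < t ≤ 1/λ₀; in particular u(t) ≍ t^{−2} φ'(t^{−1})/φ(t^{−1})² as t → 0+. -/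
open MeasureTheory Real Set

/-!
Write `w = -(1/φ)' = φ'/φ²`, which is the Laplace transform of `t ↦ t * u t`; the claim becomes
`u t ≍ t⁻² * w t⁻¹`. Since `u` decreases, restricting the integral for `w t⁻¹` to `(0, t]` gives
`u t ≤ 2 * e * t⁻² * w t⁻¹`. Conversely, cut that integral at `r * t`. On `(0, r * t]` the upper
bound just obtained, combined with the scaling of `w`, shows that the contribution is at most a
multiple of `r ^ δ * w t⁻¹`, hence at most `w t⁻¹ / 2` for small `r`; on `(r * t, ∞)` the integral
is at most `t² * u (r * t)`. So `w t⁻¹ / 2 ≤ t² * u (r * t)`.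
-/

/-- The Laplace transform `∫₀^∞ e^{-l t} f(t) dt`; its value is `0` where the integral diverges. -/
noncomputable def laplaceTransform (f : ℝ → ℝ) (l : ℝ) : ℝ :=
  ∫ t in Ioi (0 : ℝ), Real.exp (-(l * t)) * f t

/-- Absolute convergence of the integral that defines `laplaceTransform f l`. -/
def LaplaceConvergent (f : ℝ → ℝ) (l : ℝ) : Prop :=
  IntegrableOn (fun t ↦ Real.exp (-(l * t)) * f t) (Ioi 0)

section LaplaceTransform

variable {f : ℝ → ℝ} {a b : ℝ}

lemma LaplaceConvergent.of_laplaceTransform_ne_zero (h : laplaceTransform f a ≠ 0) :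
    LaplaceConvergent f a :=
  Integrable.of_integral_ne_zero h

lemma LaplaceConvergent.mono (hf : LaplaceConvergent f a) (hab : a ≤ b) :
    LaplaceConvergent f b := by
  have hbound : ∀ t ∈ Ioi (0 : ℝ), ‖Real.exp (-((b - a) * t))‖ ≤ 1 := fun t (ht : 0 < t) ↦ by
    rw [Real.norm_eq_abs, Real.abs_exp, Real.exp_le_one_iff, neg_nonpos]
    exact mul_nonneg (sub_nonneg.2 hab) ht.le
  refine (Integrable.bdd_mul hf
    (by fun_prop : Continuous fun t ↦ Real.exp (-((b - a) * t))).aestronglyMeasurable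
    (ae_restrict_of_forall_mem measurableSet_Ioi hbound)).congr (ae_of_all _ fun t ↦ ?_)
  dsimp only
  rw [← mul_assoc, ← Real.exp_add]
  ring_nf

lemma LaplaceConvergent.id_mul (hf : LaplaceConvergent f a) (hab : a < b) :
    LaplaceConvergent (fun t ↦ t * f t) b := by
  have hba : 0 < b - a := sub_pos.2 hab
  have hbound : ∀ t ∈ Ioi (0 : ℝ), ‖t * Real.exp (-((b - a) * t))‖ ≤ (b - a)⁻¹ :=
    fun t (ht : 0 < t) ↦ by
      rw [Real.norm_of_nonneg (by positivity), Real.exp_neg, ← div_eq_mul_inv,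
        div_le_iff₀ (Real.exp_pos _), le_inv_mul_iff₀ hba]
      linarith [Real.add_one_le_exp ((b - a) * t)]
  refine (Integrable.bdd_mul hf
    (by fun_prop : Continuous fun t ↦ t * Real.exp (-((b - a) * t))).aestronglyMeasurable
    (ae_restrict_of_forall_mem measurableSet_Ioi hbound)).congr (ae_of_all _ fun t ↦ ?_)
  have hexp : Real.exp (-(b * t)) = Real.exp (-((b - a) * t)) * Real.exp (-(a * t)) := by
    rw [← Real.exp_add]
    ring_nf
  dsimp only
  rw [hexp]
  ring

lemma hasDerivAt_laplaceTransform (hf : LaplaceConvergent f a) (hab : a < b) :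
    HasDerivAt (laplaceTransform f) (-laplaceTransform (fun t ↦ t * f t) b) b := by
  obtain ⟨c, hac, hcb⟩ := exists_between hab
  have hmeas : ∀ᶠ l in nhds b, AEStronglyMeasurable (fun t ↦ Real.exp (-(l * t)) * f t)
      (volume.restrict (Ioi 0)) := by
    filter_upwards [Ioi_mem_nhds hab] with l hl
    exact (hf.mono (le_of_lt hl)).aestronglyMeasurable
  have hbound : ∀ t ∈ Ioi (0 : ℝ), ∀ l ∈ Ioi c,
      ‖-(Real.exp (-(l * t)) * (t * f t))‖ ≤ ‖Real.exp (-(c * t)) * (t * f t)‖ := by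
    intro t (ht : 0 < t) l (hl : c < l)
    rw [norm_neg, norm_mul, norm_mul _ (t * f t), Real.norm_of_nonneg (Real.exp_pos _).le,
      Real.norm_of_nonneg (Real.exp_pos _).le]
    gcongr
  have hderiv : ∀ t l : ℝ, HasDerivAt (fun l ↦ Real.exp (-(l * t)) * f t)
      (-(Real.exp (-(l * t)) * (t * f t))) l := fun t l ↦
    ((hasDerivAt_mul_const t).fun_neg.exp.mul_const (f t)).congr_deriv (by ring)
  have h := (hasDerivAt_integral_of_dominated_loc_of_deriv_le (Ioi_mem_nhds hcb) hmeas
    (hf.mono hab.le) (hf.id_mul hab).neg.aestronglyMeasurable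
    (ae_restrict_of_forall_mem measurableSet_Ioi hbound) (hf.id_mul hac).norm
    (ae_of_all _ fun t l _ ↦ hderiv t l)).2
  rwa [integral_neg] at h

lemma laplaceTransform_nonneg (hf : ∀ t, 0 < t → 0 ≤ f t) (l : ℝ) : 0 ≤ laplaceTransform f l :=
  setIntegral_nonneg measurableSet_Ioi fun t ht ↦ mul_nonneg (Real.exp_pos _).le (hf t ht)

lemma laplaceTransform_anti (hf₀ : ∀ t, 0 < t → 0 ≤ f t)
    (hf : LaplaceConvergent f a) (hab : a ≤ b) :
    laplaceTransform f b ≤ laplaceTransform f a := by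
  refine setIntegral_mono_on (hf.mono hab) hf measurableSet_Ioi fun t (ht : 0 < t) ↦ ?_
  have := hf₀ t ht
  gcongr

lemma laplaceTransform_id (ha : 0 < a) : laplaceTransform (fun t ↦ t) a = (a ^ 2)⁻¹ := by
  have htwo : (2 : ℝ) - 1 = 1 := by norm_num
  simpa [laplaceTransform, htwo, mul_comm] using
    Real.integral_rpow_mul_exp_neg_mul_Ioi two_pos ha

end LaplaceTransform

section DecreasingDensity

variable {u : ℝ → ℝ} {σ δ : ℝ}

lemma le_laplaceTransform_id_mul_of_antitoneOn (hu : AntitoneOn u (Ioi 0))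
    (hu₀ : ∀ t, 0 < t → 0 ≤ u t) {t : ℝ} (ht : 0 < t)
    (hconv : LaplaceConvergent (fun s ↦ s * u s) t⁻¹) :
    u t ≤ 2 * Real.exp 1 * (t ^ 2)⁻¹ * laplaceTransform (fun s ↦ s * u s) t⁻¹ := by
  have hnonneg : ∀ s ∈ Ioi (0 : ℝ), 0 ≤ Real.exp (-(t⁻¹ * s)) * (s * u s) :=
    fun s (hs : 0 < s) ↦ mul_nonneg (Real.exp_pos _).le (mul_nonneg hs.le (hu₀ s hs))
  have hpoint : ∀ s ∈ Ioc 0 t, s * (Real.exp (-1) * u t) ≤ Real.exp (-(t⁻¹ * s)) * (s * u s) := by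
    rintro s ⟨hs, hst⟩
    have hts : t⁻¹ * s ≤ 1 := (inv_mul_le_one₀ ht).2 hst
    have hus : u t ≤ u s := hu hs ht hst
    have := hu₀ t ht
    calc s * (Real.exp (-1) * u t) = Real.exp (-1) * (s * u t) := by ring
      _ ≤ Real.exp (-(t⁻¹ * s)) * (s * u s) := by gcongr
  have hint : t ^ 2 / 2 * (Real.exp (-1) * u t) ≤ laplaceTransform (fun s ↦ s * u s) t⁻¹ :=
    calc t ^ 2 / 2 * (Real.exp (-1) * u t)
        = ∫ s in Ioc 0 t, s * (Real.exp (-1) * u t) := by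
          rw [integral_mul_const, ← intervalIntegral.integral_of_le ht.le, integral_id]
          ring
      _ ≤ ∫ s in Ioc 0 t, Real.exp (-(t⁻¹ * s)) * (s * u s) :=
          setIntegral_mono_on (by fun_prop : Continuous _).integrableOn_Ioc
            (hconv.mono_set Ioc_subset_Ioi_self) measurableSet_Ioc hpoint
      _ ≤ laplaceTransform (fun s ↦ s * u s) t⁻¹ :=
          setIntegral_mono_set hconv (ae_restrict_of_forall_mem measurableSet_Ioi hnonneg)
            Ioc_subset_Ioi_self.eventuallyLE
  calc u t = 2 * Real.exp 1 * (t ^ 2)⁻¹ * (t ^ 2 / 2 * (Real.exp (-1) * u t)) := by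
        rw [Real.exp_neg]
        field_simp
    _ ≤ 2 * Real.exp 1 * (t ^ 2)⁻¹ * laplaceTransform (fun s ↦ s * u s) t⁻¹ := by gcongr

lemma setIntegral_Ioc_id_mul_le_of_le_rpow {C a l : ℝ} (hu₀ : ∀ t, 0 < t → 0 ≤ u t)
    (hδ : 0 < δ) (ha : 0 ≤ a) (hl : 0 ≤ l) (hu : ∀ s ∈ Ioc 0 a, u s ≤ C * s ^ (δ - 2))
    (hconv : LaplaceConvergent (fun s ↦ s * u s) l) :
    ∫ s in Ioc 0 a, Real.exp (-(l * s)) * (s * u s) ≤ C * (a ^ δ / δ) := by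
  have hrpow : IntegrableOn (fun s : ℝ ↦ s ^ (δ - 1)) (Ioc 0 a) :=
    (intervalIntegral.intervalIntegrable_rpow' (by linarith)).1
  have hpoint : ∀ s ∈ Ioc 0 a, Real.exp (-(l * s)) * (s * u s) ≤ C * s ^ (δ - 1) := by
    intro s hs
    have hs₀ : 0 < s := hs.1
    have hexp : Real.exp (-(l * s)) ≤ 1 :=
      Real.exp_le_one_iff.2 (neg_nonpos.2 (mul_nonneg hl hs₀.le))
    calc Real.exp (-(l * s)) * (s * u s)
        ≤ s * u s := mul_le_of_le_one_left (mul_nonneg hs₀.le (hu₀ s hs₀)) hexp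
      _ ≤ s * (C * s ^ (δ - 2)) := mul_le_mul_of_nonneg_left (hu s hs) hs₀.le
      _ = C * s ^ (δ - 1) := by
          rw [show δ - 1 = δ - 2 + 1 by ring, Real.rpow_add_one hs₀.ne']
          ring
  calc ∫ s in Ioc 0 a, Real.exp (-(l * s)) * (s * u s)
      ≤ ∫ s in Ioc 0 a, C * s ^ (δ - 1) :=
        setIntegral_mono_on (hconv.mono_set Ioc_subset_Ioi_self) (hrpow.const_mul C)
          measurableSet_Ioc hpoint
    _ = C * (a ^ δ / δ) := by
        rw [integral_const_mul, ← intervalIntegral.integral_of_le ha,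
          integral_rpow (Or.inl (by linarith)), sub_add_cancel, Real.zero_rpow hδ.ne', sub_zero]

lemma setIntegral_Ioi_id_mul_le_of_antitoneOn {a l : ℝ} (hu : AntitoneOn u (Ioi 0)) (ha : 0 < a)
    (hua : 0 ≤ u a) (hl : 0 < l) (hconv : LaplaceConvergent (fun s ↦ s * u s) l) :
    ∫ s in Ioi a, Real.exp (-(l * s)) * (s * u s) ≤ (l ^ 2)⁻¹ * u a := by
  have hsub : Ioi a ⊆ Ioi (0 : ℝ) := Ioi_subset_Ioi ha.le
  have hconv_id : LaplaceConvergent (fun s ↦ s) l := by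
    apply LaplaceConvergent.of_laplaceTransform_ne_zero
    rw [laplaceTransform_id hl]
    positivity
  have hnonneg : ∀ s ∈ Ioi (0 : ℝ), 0 ≤ Real.exp (-(l * s)) * s :=
    fun s (hs : 0 < s) ↦ by positivity
  calc ∫ s in Ioi a, Real.exp (-(l * s)) * (s * u s)
      ≤ ∫ s in Ioi a, Real.exp (-(l * s)) * s * u a := by
        refine setIntegral_mono_on (hconv.mono_set hsub)
          (Integrable.mul_const (hconv_id.mono_set hsub) _) measurableSet_Ioi
          fun s (hs : a < s) ↦ ?_
        rw [← mul_assoc]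
        exact mul_le_mul_of_nonneg_left (hu ha (ha.trans hs) hs.le) (hnonneg s (ha.trans hs))
    _ = (∫ s in Ioi a, Real.exp (-(l * s)) * s) * u a := integral_mul_const _ _
    _ ≤ laplaceTransform (fun s ↦ s) l * u a :=
        mul_le_mul_of_nonneg_right (setIntegral_mono_set hconv_id
          (ae_restrict_of_forall_mem measurableSet_Ioi hnonneg) hsub.eventuallyLE) hua
    _ = (l ^ 2)⁻¹ * u a := by rw [laplaceTransform_id hl]

lemma laplaceTransform_id_mul_le_of_le_rpow {C a l : ℝ} (hu : AntitoneOn u (Ioi 0))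
    (hu₀ : ∀ t, 0 < t → 0 ≤ u t) (hδ : 0 < δ) (ha : 0 < a) (hl : 0 < l)
    (hua : ∀ s ∈ Ioc 0 a, u s ≤ C * s ^ (δ - 2))
    (hconv : LaplaceConvergent (fun s ↦ s * u s) l) :
    laplaceTransform (fun s ↦ s * u s) l ≤ C * (a ^ δ / δ) + (l ^ 2)⁻¹ * u a := by
  rw [laplaceTransform, ← Ioc_union_Ioi_eq_Ioi ha.le,
    setIntegral_union Ioc_disjoint_Ioi_same measurableSet_Ioi
      (hconv.mono_set Ioc_subset_Ioi_self) (hconv.mono_set (Ioi_subset_Ioi ha.le))]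
  exact add_le_add (setIntegral_Ioc_id_mul_le_of_le_rpow hu₀ hδ ha.le hl.le hua hconv)
    (setIntegral_Ioi_id_mul_le_of_antitoneOn hu ha (hu₀ a ha) hl hconv)

lemma le_rpow_of_laplaceTransform_id_mul_scaling {s t : ℝ} (hu : AntitoneOn u (Ioi 0))
    (hu₀ : ∀ t, 0 < t → 0 ≤ u t) (hs : 0 < s) (hst : s ≤ t)
    (hconv : LaplaceConvergent (fun s ↦ s * u s) s⁻¹)
    (hscal : ∀ x, 1 ≤ x → laplaceTransform (fun s ↦ s * u s) (t⁻¹ * x) ≤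
      σ * x ^ (-δ) * laplaceTransform (fun s ↦ s * u s) t⁻¹) :
    u s ≤ 2 * Real.exp 1 * σ * t ^ (-δ) * laplaceTransform (fun s ↦ s * u s) t⁻¹ *
      s ^ (δ - 2) := by
  set w := laplaceTransform fun s ↦ s * u s
  have ht : 0 < t := hs.trans_le hst
  have hw : w s⁻¹ ≤ σ * (t ^ (-δ) * s ^ δ) * w t⁻¹ := by
    have hrpow : (t / s) ^ (-δ) = t ^ (-δ) * s ^ δ := by
      rw [Real.div_rpow ht.le hs.le, Real.rpow_neg hs.le, div_inv_eq_mul]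
    have hinv : t⁻¹ * (t / s) = s⁻¹ := by field_simp
    simpa only [hrpow, hinv] using hscal (t / s) ((one_le_div hs).2 hst)
  calc u s ≤ 2 * Real.exp 1 * (s ^ 2)⁻¹ * w s⁻¹ :=
        le_laplaceTransform_id_mul_of_antitoneOn hu hu₀ hs hconv
    _ ≤ 2 * Real.exp 1 * (s ^ 2)⁻¹ * (σ * (t ^ (-δ) * s ^ δ) * w t⁻¹) := by gcongr
    _ = 2 * Real.exp 1 * σ * t ^ (-δ) * w t⁻¹ * s ^ (δ - 2) := by
        rw [Real.rpow_sub hs, Real.rpow_two]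
        ring

lemma laplaceTransform_id_mul_le_of_scaling {r t : ℝ} (hu : AntitoneOn u (Ioi 0))
    (hu₀ : ∀ t, 0 < t → 0 ≤ u t) (hconv : ∀ l, 0 < l → LaplaceConvergent (fun s ↦ s * u s) l)
    (hδ : 0 < δ) (hr₀ : 0 < r) (hr₁ : r ≤ 1) (ht : 0 < t)
    (hscal : ∀ x, 1 ≤ x → laplaceTransform (fun s ↦ s * u s) (t⁻¹ * x) ≤
      σ * x ^ (-δ) * laplaceTransform (fun s ↦ s * u s) t⁻¹) :
    laplaceTransform (fun s ↦ s * u s) t⁻¹ ≤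
      2 * Real.exp 1 * σ / δ * r ^ δ * laplaceTransform (fun s ↦ s * u s) t⁻¹ +
        t ^ 2 * u (r * t) := by
  have hsplit := laplaceTransform_id_mul_le_of_le_rpow hu hu₀ hδ (mul_pos hr₀ ht) (inv_pos.2 ht)
    (fun s hs ↦ le_rpow_of_laplaceTransform_id_mul_scaling hu hu₀ hs.1
      (hs.2.trans (mul_le_of_le_one_left ht.le hr₁)) (hconv _ (inv_pos.2 hs.1)) hscal)
    (hconv _ (inv_pos.2 ht))
  refine hsplit.trans_eq ?_
  have : 0 < t ^ δ := Real.rpow_pos_of_pos ht δ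
  rw [Real.mul_rpow hr₀.le ht.le, Real.rpow_neg ht.le, inv_pow, inv_inv]
  field_simp

lemma sq_div_two_mul_laplaceTransform_id_mul_le_of_scaling {r t : ℝ} (hu : AntitoneOn u (Ioi 0))
    (hu₀ : ∀ t, 0 < t → 0 ≤ u t) (hconv : ∀ l, 0 < l → LaplaceConvergent (fun s ↦ s * u s) l)
    (hδ : 0 < δ) (hr₀ : 0 < r) (hr₁ : r ≤ 1) (hr : 2 * Real.exp 1 * σ / δ * r ^ δ ≤ 1 / 2)
    (ht : 0 < t)
    (hscal : ∀ x, 1 ≤ x → laplaceTransform (fun s ↦ s * u s) ((t / r)⁻¹ * x) ≤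
      σ * x ^ (-δ) * laplaceTransform (fun s ↦ s * u s) (t / r)⁻¹) :
    r ^ 2 / 2 * ((t ^ 2)⁻¹ * laplaceTransform (fun s ↦ s * u s) t⁻¹) ≤ u t := by
  set w := laplaceTransform fun s ↦ s * u s
  have hs : 0 < t / r := div_pos ht hr₀
  have hsu₀ : ∀ s, 0 < s → 0 ≤ s * u s := fun s hs ↦ mul_nonneg hs.le (hu₀ s hs)
  have hwt : w t⁻¹ ≤ w (t / r)⁻¹ :=
    laplaceTransform_anti hsu₀ (hconv _ (inv_pos.2 hs)) (inv_anti₀ ht (le_div_self ht.le hr₀ hr₁))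
  have hsplit := laplaceTransform_id_mul_le_of_scaling hu hu₀ hconv hδ hr₀ hr₁ hs hscal
  have hnear := mul_le_mul_of_nonneg_right hr (laplaceTransform_nonneg hsu₀ (t / r)⁻¹)
  rw [mul_div_cancel₀ _ hr₀.ne'] at hsplit
  have hw_le : w t⁻¹ ≤ 2 * (t / r) ^ 2 * u t := by linarith
  calc r ^ 2 / 2 * ((t ^ 2)⁻¹ * w t⁻¹)
      ≤ r ^ 2 / 2 * ((t ^ 2)⁻¹ * (2 * (t / r) ^ 2 * u t)) := by gcongr
    _ = u t := by field_simp

lemma exists_mul_rpow_le (C : ℝ) {ε : ℝ} (hε : 0 < ε) (hδ : 0 < δ) :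
    ∃ r, 0 < r ∧ r ≤ 1 ∧ C * r ^ δ ≤ ε := by
  have hcont : Continuous fun r : ℝ ↦ C * r ^ δ :=
    (Real.continuous_rpow_const hδ.le).const_mul C
  have hzero : C * (0 : ℝ) ^ δ < ε := by rwa [Real.zero_rpow hδ.ne', mul_zero]
  obtain ⟨r, hr, hr₀, hr₁⟩ := (((hcont.continuousAt.eventually_lt_const hzero).filter_mono
    nhdsWithin_le_nhds).and (Ioc_mem_nhdsGT zero_lt_one)).exists
  exact ⟨r, hr₀, hr₁, hr.le⟩

lemma exists_mul_le_on_Ioc_of_antitoneOn {f : ℝ → ℝ} {a b A : ℝ} (hu : AntitoneOn u (Ioi 0))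
    (hub : 0 < u b) (hf : ∀ t ∈ Ioc 0 b, 0 ≤ f t) (hfA : ∀ t ∈ Ioc a b, f t ≤ A)
    (ha : ∃ c, 0 < c ∧ ∀ t ∈ Ioc 0 a, c * f t ≤ u t) :
    ∃ c, 0 < c ∧ ∀ t ∈ Ioc 0 b, c * f t ≤ u t := by
  obtain ⟨c, hc, hcu⟩ := ha
  have hmax : 0 < max A 1 := lt_max_of_lt_right one_pos
  refine ⟨min c (u b / max A 1), lt_min hc (div_pos hub hmax), fun t ht ↦ ?_⟩
  have hft := hf t ht
  rcases le_or_gt t a with hta | hat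
  · calc min c (u b / max A 1) * f t ≤ c * f t := by gcongr; exact min_le_left _ _
      _ ≤ u t := hcu t ⟨ht.1, hta⟩
  · calc min c (u b / max A 1) * f t ≤ u b / max A 1 * max A 1 := by
          gcongr
          exacts [min_le_right _ _, (hfA t ⟨hat, ht.2⟩).trans (le_max_left _ _)]
      _ = u b := div_mul_cancel₀ _ hmax.ne'
      _ ≤ u t := hu ht.1 (ht.1.trans_le ht.2) ht.2

lemma exists_mul_laplaceTransform_id_mul_le_of_scaling {l₀ : ℝ} (hu : AntitoneOn u (Ioi 0))
    (hupos : ∀ t, 0 < t → 0 < u t) (hconv : ∀ l, 0 < l → LaplaceConvergent (fun s ↦ s * u s) l)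
    (hl₀ : 0 < l₀) (hδ : 0 < δ)
    (hscal : ∀ x, 1 ≤ x → ∀ l, l₀ ≤ l → laplaceTransform (fun s ↦ s * u s) (l * x) ≤
      σ * x ^ (-δ) * laplaceTransform (fun s ↦ s * u s) l) :
    ∃ c, 0 < c ∧ ∀ t ∈ Ioc 0 (1 / l₀),
      c * ((t ^ 2)⁻¹ * laplaceTransform (fun s ↦ s * u s) t⁻¹) ≤ u t := by
  set w := laplaceTransform fun s ↦ s * u s
  have hu₀ : ∀ t, 0 < t → 0 ≤ u t := fun t ht ↦ (hupos t ht).le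
  have hsu₀ : ∀ s, 0 < s → 0 ≤ s * u s := fun s hs ↦ mul_nonneg hs.le (hu₀ s hs)
  have hw₀ : ∀ l, 0 ≤ w l := laplaceTransform_nonneg hsu₀
  obtain ⟨r, hr₀, hr₁, hr⟩ := exists_mul_rpow_le (2 * Real.exp 1 * σ / δ) one_half_pos hδ
  refine exists_mul_le_on_Ioc_of_antitoneOn hu (hupos _ (one_div_pos.2 hl₀))
    (fun t ht ↦ mul_nonneg (inv_nonneg.2 (sq_nonneg t)) (hw₀ _)) (a := r / l₀)
    (A := ((r / l₀) ^ 2)⁻¹ * w (1 / l₀)⁻¹) (fun t ht ↦ ?_)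
    ⟨r ^ 2 / 2, by positivity, fun t ht ↦ ?_⟩
  · have ha : 0 < r / l₀ := div_pos hr₀ hl₀
    have ht₀ : 0 < t := ha.trans ht.1
    have hwt : w t⁻¹ ≤ w (1 / l₀)⁻¹ :=
      laplaceTransform_anti hsu₀ (hconv _ (inv_pos.2 (one_div_pos.2 hl₀))) (inv_anti₀ ht₀ ht.2)
    have := hw₀ t⁻¹
    have hat := ht.1.le
    gcongr
  · obtain ⟨ht₀, htr⟩ := ht
    have hl₀s : l₀ ≤ (t / r)⁻¹ := by
      rwa [inv_div, le_div_iff₀ ht₀, ← le_div_iff₀' hl₀]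
    exact sq_div_two_mul_laplaceTransform_id_mul_le_of_scaling hu hu₀ hconv hδ hr₀ hr₁ hr ht₀
      fun x hx ↦ hscal x hx _ hl₀s

end DecreasingDensity

section ReciprocalLaplaceTransform

variable {φ φ' u : ℝ → ℝ}

lemma laplaceConvergent_of_laplaceTransform_eq_one_div {l : ℝ} (hφpos : 0 < φ l)
    (hlap : laplaceTransform u l = 1 / φ l) : LaplaceConvergent u l :=
  .of_laplaceTransform_ne_zero (hlap ▸ (one_div_pos.2 hφpos).ne')

lemma laplaceTransform_id_mul_eq_deriv_div_sq (hφpos : ∀ l, 0 < l → 0 < φ l)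
    (hlap : ∀ l, 0 < l → laplaceTransform u l = 1 / φ l) {l φ'l : ℝ} (hl : 0 < l)
    (hderiv : HasDerivAt φ φ'l l) :
    laplaceTransform (fun t ↦ t * u t) l = φ'l / φ l ^ 2 := by
  have hhalf := half_pos hl
  have hconv := laplaceConvergent_of_laplaceTransform_eq_one_div (hφpos _ hhalf) (hlap _ hhalf)
  have heq : laplaceTransform u =ᶠ[nhds l] φ⁻¹ := by
    filter_upwards [Ioi_mem_nhds hl] with a ha
    rw [hlap a ha, one_div, Pi.inv_apply]
  have huniq := (hasDerivAt_laplaceTransform hconv (half_lt_self hl)).unique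
    ((hderiv.inv (hφpos l hl).ne').congr_of_eventuallyEq heq)
  rwa [neg_div, neg_inj] at huniq

lemma monotoneOn_of_laplaceTransform_eq_one_div (hu₀ : ∀ t, 0 < t → 0 ≤ u t)
    (hφpos : ∀ l, 0 < l → 0 < φ l) (hlap : ∀ l, 0 < l → laplaceTransform u l = 1 / φ l) :
    MonotoneOn φ (Ioi 0) := by
  intro a ha b hb hab
  have hle := laplaceTransform_anti hu₀
    (laplaceConvergent_of_laplaceTransform_eq_one_div (hφpos a ha) (hlap a ha)) hab
  rwa [hlap a ha, hlap b hb, one_div_le_one_div (hφpos b hb) (hφpos a ha)] at hle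

lemma laplaceTransform_id_mul_le_of_deriv_le (hu₀ : ∀ t, 0 < t → 0 ≤ u t)
    (hφpos : ∀ l, 0 < l → 0 < φ l) (hderiv : ∀ l, 0 < l → HasDerivAt φ (φ' l) l)
    (hlap : ∀ l, 0 < l → laplaceTransform u l = 1 / φ l) {a b K : ℝ} (ha : 0 < a) (hab : a ≤ b)
    (hK : φ' b ≤ K * φ' a) :
    laplaceTransform (fun t ↦ t * u t) b ≤ K * laplaceTransform (fun t ↦ t * u t) a := by
  set w := laplaceTransform fun t ↦ t * u t
  have hb : 0 < b := ha.trans_le hab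
  have hφa := hφpos a ha
  have hφab : φ a ≤ φ b := monotoneOn_of_laplaceTransform_eq_one_div hu₀ hφpos hlap ha hb hab
  have hwb : 0 ≤ w b := laplaceTransform_nonneg (fun t ht ↦ mul_nonneg ht.le (hu₀ t ht)) b
  have hφ' : ∀ l, 0 < l → φ' l = w l * φ l ^ 2 := fun l hl ↦
    ((eq_div_iff (pow_ne_zero 2 (hφpos l hl).ne')).1
      (laplaceTransform_id_mul_eq_deriv_div_sq hφpos hlap hl (hderiv l hl))).symm
  refine le_of_mul_le_mul_right ?_ (pow_pos hφa 2)
  calc w b * φ a ^ 2 ≤ w b * φ b ^ 2 := by gcongr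
    _ = φ' b := (hφ' b hb).symm
    _ ≤ K * φ' a := hK
    _ = K * w a * φ a ^ 2 := by rw [hφ' a ha, mul_assoc]

end ReciprocalLaplaceTransform

theorem stmt_4_general (φ φ' u : ℝ → ℝ) (σ lam₀ δ : ℝ)
    (hφpos : ∀ l : ℝ, 0 < l → 0 < φ l)
    (hderiv : ∀ l : ℝ, 0 < l → HasDerivAt φ (φ' l) l)
    (hupos : ∀ t : ℝ, 0 < t → 0 < u t)
    (hudec : ∀ s t : ℝ, 0 < s → s ≤ t → u t ≤ u s)
    (hlap : ∀ l : ℝ, 0 < l →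
      (∫ t in Ioi (0:ℝ), Real.exp (-(l * t)) * u t) = 1 / φ l)
    (hlam₀ : 0 < lam₀) (hδ0 : 0 < δ)
    (hA3 : ∀ x : ℝ, 1 ≤ x → ∀ l : ℝ, lam₀ ≤ l →
      φ' (l * x) ≤ σ * x ^ (-δ) * φ' l) :
    ∃ c₁ : ℝ, 0 < c₁ ∧ ∃ c₂ : ℝ, 0 < c₂ ∧
      ∀ t : ℝ, 0 < t → t ≤ 1 / lam₀ →
        c₁ * (t ^ 2)⁻¹ * (φ' t⁻¹ / (φ t⁻¹) ^ 2) ≤ u t ∧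
        u t ≤ c₂ * (t ^ 2)⁻¹ * (φ' t⁻¹ / (φ t⁻¹) ^ 2) := by
  have hu : AntitoneOn u (Ioi 0) := fun s hs t _ hst ↦ hudec s t hs hst
  have hu₀ : ∀ t, 0 < t → 0 ≤ u t := fun t ht ↦ (hupos t ht).le
  have hw : ∀ l, 0 < l → laplaceTransform (fun s ↦ s * u s) l = φ' l / φ l ^ 2 :=
    fun l hl ↦ laplaceTransform_id_mul_eq_deriv_div_sq hφpos hlap hl (hderiv l hl)
  have hconv : ∀ l, 0 < l → LaplaceConvergent (fun s ↦ s * u s) l := fun l hl ↦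
    (laplaceConvergent_of_laplaceTransform_eq_one_div (hφpos _ (half_pos hl))
      (hlap _ (half_pos hl))).id_mul (half_lt_self hl)
  obtain ⟨c, hc, hlower⟩ := exists_mul_laplaceTransform_id_mul_le_of_scaling hu hupos hconv hlam₀
    hδ0 fun x hx l hl ↦ laplaceTransform_id_mul_le_of_deriv_le hu₀ hφpos hderiv hlap
      (hlam₀.trans_le hl) (le_mul_of_one_le_right (hlam₀.trans_le hl).le hx) (hA3 x hx l hl)
  refine ⟨c, hc, 2 * Real.exp 1, by positivity, fun t ht htl ↦ ?_⟩
  rw [← hw _ (inv_pos.2 ht), mul_assoc c]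
  exact ⟨hlower t ⟨ht, htl⟩,
    le_laplaceTransform_id_mul_of_antitoneOn hu hu₀ ht (hconv _ (inv_pos.2 ht))⟩

/-- If `φ : (0,∞) → (0,∞)` is increasing and differentiable with
`φ'` positive and decreasing, `u : (0,∞) → (0,∞)` is decreasing with
`∫₀^∞ e^{−λt} u(t) dt = 1/φ(λ)` for all `λ > 0`, and condition (A-3) holds,
then `u(t) ≍ t^{−2} φ'(t^{−1})/φ(t^{−1})²` for `0 < t ≤ 1/λ₀`. -/
theorem stmt_4 (φ φ' u : ℝ → ℝ) (σ lam₀ δ : ℝ)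
    (hφpos : ∀ l : ℝ, 0 < l → 0 < φ l)
    (hφmono : ∀ s t : ℝ, 0 < s → s ≤ t → φ s ≤ φ t)
    (hderiv : ∀ l : ℝ, 0 < l → HasDerivAt φ (φ' l) l)
    (hφ'pos : ∀ l : ℝ, 0 < l → 0 < φ' l)
    (hφ'dec : ∀ s t : ℝ, 0 < s → s ≤ t → φ' t ≤ φ' s)
    (hupos : ∀ t : ℝ, 0 < t → 0 < u t)
    (hudec : ∀ s t : ℝ, 0 < s → s ≤ t → u t ≤ u s)
    (hlap : ∀ l : ℝ, 0 < l →
      (∫ t in Ioi (0:ℝ), Real.exp (-(l * t)) * u t) = 1 / φ l)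
    (hσ : 0 < σ) (hlam₀ : 0 < lam₀) (hδ0 : 0 < δ) (hδ1 : δ ≤ 1)
    (hA3 : ∀ x : ℝ, 1 ≤ x → ∀ l : ℝ, lam₀ ≤ l →
      φ' (l * x) ≤ σ * x ^ (-δ) * φ' l) :
    ∃ c₁ : ℝ, 0 < c₁ ∧ ∃ c₂ : ℝ, 0 < c₂ ∧
      ∀ t : ℝ, 0 < t → t ≤ 1 / lam₀ →
        c₁ * (t ^ 2)⁻¹ * (φ' t⁻¹ / (φ t⁻¹) ^ 2) ≤ u t ∧
        u t ≤ c₂ * (t ^ 2)⁻¹ * (φ' t⁻¹ / (φ t⁻¹) ^ 2) :=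
  stmt_4_general φ φ' u σ lam₀ δ hφpos hderiv hupos hudec hlap hlam₀ hδ0 hA3
end

section
/- Let φ : (0,∞) → (0,∞) be differentiable and suppose there exist a constant θ ≥ 0 and a Borel measure ν on (0,∞) with ∫_{(0,∞)} (1 ∧ t) ν(dt) < ∞ such that λ/φ(λ) = θ + ∫_{(0,∞)} (1 − e^{−λt}) ν(dt) for all λ > 0. Then the function η₂(λ) = λ² φ'(λ)/φ(λ)² is increasing on (0,∞); if moreover φ is increasing, then the function η₁(λ) = λ² φ'(λ) is also increasing on (0,∞). -/
open MeasureTheory Real Set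

/-!
Put `f(l) = l / φ(l)`. Then `η₂(l) = l² φ'(l) / φ(l)² = f(l) - l f'(l)` is the intercept at `0` of
the tangent line of `f` at `l`. As a mixture of the concave functions `l ↦ 1 - e^{-lt}`, `f` is
concave, and the intercept of the tangent line of a concave function increases with the point of
tangency in `[0, ∞)`. When `φ` increases, `η₁ = η₂ φ²` is a product of nonnegative increasing
functions.
-/

section TangentIntercept

variable {S : Set ℝ} {f f' φ φ' : ℝ → ℝ}

lemma monotoneOn_sub_mul_deriv_of_concaveOn (hS : S ⊆ Ici 0) (hf : ConcaveOn ℝ S f)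
    (hf' : ∀ x ∈ S, HasDerivWithinAt f (f' x) S x) :
    MonotoneOn (fun x => f x - x * f' x) S := by
  intro x hx y hy hxy
  rcases hxy.eq_or_lt with rfl | hlt
  · exact le_rfl
  have slope_le : slope f x y ≤ f' x := hf.slope_le_of_hasDerivWithinAt hx hy hlt (hf' x hx)
  have le_slope : f' y ≤ slope f x y := hf.le_slope_of_hasDerivWithinAt hx hy hlt (hf' y hy)
  have chord : f' y * (y - x) ≤ f y - f x := by
    rwa [slope_def_field, le_div_iff₀ (sub_pos.2 hlt)] at le_slope
  have deriv_anti : x * f' y ≤ x * f' x :=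
    mul_le_mul_of_nonneg_left (le_slope.trans slope_le) (hS hx)
  change f x - x * f' x ≤ f y - y * f' y
  linarith

lemma monotoneOn_sq_mul_deriv_div_sq_of_concaveOn_div (hS : S ⊆ Ici 0)
    (hφ : ∀ x ∈ S, φ x ≠ 0)
    (hφ' : ∀ x ∈ S, HasDerivWithinAt φ (φ' x) S x) (hconc : ConcaveOn ℝ S fun x => x / φ x) :
    MonotoneOn (fun x => x ^ 2 * φ' x / φ x ^ 2) S := by
  have hasDeriv_div : ∀ x ∈ S,
      HasDerivWithinAt (fun x => x / φ x) ((1 * φ x - x * φ' x) / φ x ^ 2) S x :=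
    fun x hx => (hasDerivWithinAt_id x S).fun_div (hφ' x hx) (hφ x hx)
  refine (monotoneOn_sub_mul_deriv_of_concaveOn hS hconc hasDeriv_div).congr fun x hx => ?_
  have := hφ x hx
  field_simp
  ring

lemma monotoneOn_sq_mul_deriv_of_concaveOn_div (hS : S ⊆ Ici 0) (hφ : ∀ x ∈ S, 0 < φ x)
    (hφ' : ∀ x ∈ S, HasDerivWithinAt φ (φ' x) S x) (hconc : ConcaveOn ℝ S fun x => x / φ x)
    (hmono : MonotoneOn φ S) :
    MonotoneOn (fun x => x ^ 2 * φ' x) S := by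
  intro x hx y hy hxy
  rcases hxy.eq_or_lt with rfl | hlt
  · exact le_rfl
  have Icc_subset : Icc x y ⊆ S := hconc.1.ordConnected.out hx hy
  have deriv_nonneg : 0 ≤ φ' x :=
    ((hφ' x hx).mono Icc_subset).nonneg_of_monotoneOn
      (uniqueDiffOn_Icc hlt x (left_mem_Icc.2 hxy)).accPt (hmono.mono Icc_subset)
  have η₂_le : x ^ 2 * φ' x / φ x ^ 2 ≤ y ^ 2 * φ' y / φ y ^ 2 :=
    monotoneOn_sq_mul_deriv_div_sq_of_concaveOn_div hS (fun z hz => (hφ z hz).ne') hφ' hconc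
      hx hy hxy
  have sq_pos : ∀ z ∈ S, 0 < φ z ^ 2 := fun z hz => pow_pos (hφ z hz) 2
  calc x ^ 2 * φ' x = x ^ 2 * φ' x / φ x ^ 2 * φ x ^ 2 := (div_mul_cancel₀ _ (sq_pos x hx).ne').symm
    _ ≤ x ^ 2 * φ' x / φ x ^ 2 * φ y ^ 2 := by
        gcongr
        · exact (hφ x hx).le
        · exact hmono hx hy hxy
    _ ≤ y ^ 2 * φ' y / φ y ^ 2 * φ y ^ 2 := by gcongr
    _ = y ^ 2 * φ' y := div_mul_cancel₀ _ (sq_pos y hy).ne'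

end TangentIntercept

section LevyKhintchine

lemma one_sub_exp_neg_mul_le_max_mul_min {x t : ℝ} (ht : 0 ≤ t) :
    1 - exp (-(x * t)) ≤ max 1 x * min 1 t := by
  rcases le_total 1 t with h | h
  · rw [min_eq_left h, mul_one]
    exact (sub_le_self 1 (exp_nonneg _)).trans (le_max_left 1 x)
  · rw [min_eq_right h]
    calc 1 - exp (-(x * t)) ≤ x * t := by linarith [one_sub_le_exp_neg (x * t)]
      _ ≤ max 1 x * t := by gcongr; exact le_max_right 1 x

lemma concaveOn_one_sub_exp_neg_mul (t : ℝ) :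
    ConcaveOn ℝ univ fun x => 1 - exp (-(x * t)) := by
  have hconv : ConvexOn ℝ univ fun x => exp (-(x * t)) := by
    simpa using! convexOn_exp.comp_linearMap (-LinearMap.mulRight ℝ t)
  exact (concaveOn_const 1 convex_univ).sub hconv

variable {ν : Measure ℝ}

lemma integrableOn_one_sub_exp_neg_mul (hν : IntegrableOn (fun t => min 1 t) (Ioi 0) ν)
    {x : ℝ} (hx : 0 ≤ x) :
    IntegrableOn (fun t => 1 - exp (-(x * t))) (Ioi 0) ν := by
  refine (hν.const_mul (max 1 x)).mono' (by fun_prop) ?_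
  filter_upwards [ae_restrict_mem measurableSet_Ioi] with t (ht : 0 < t)
  have exp_le_one : exp (-(x * t)) ≤ 1 := exp_le_one_iff.2 (neg_nonpos.2 (by positivity))
  rw [norm_of_nonneg (sub_nonneg.2 exp_le_one)]
  exact one_sub_exp_neg_mul_le_max_mul_min ht.le

lemma concaveOn_const_add_integral_one_sub_exp_neg_mul (c : ℝ)
    (hν : IntegrableOn (fun t => min 1 t) (Ioi 0) ν) :
    ConcaveOn ℝ (Ici 0) fun x => c + ∫ t in Ioi (0 : ℝ), (1 - exp (-(x * t))) ∂ν :=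
  (concaveOn_const c (convex_Ici 0)).add <| integral_concaveOn_of_integrand_ae (convex_Ici 0)
    (.of_forall fun t => (concaveOn_one_sub_exp_neg_mul t).subset (subset_univ _) (convex_Ici 0))
    fun _ hx => integrableOn_one_sub_exp_neg_mul hν hx

lemma integrableOn_min_one_of_lintegral_lt_top
    (hν : ∫⁻ t in Ioi (0 : ℝ), ENNReal.ofReal (min 1 t) ∂ν < ⊤) :
    IntegrableOn (fun t => min 1 t) (Ioi 0) ν := by
  refine (lintegral_ofReal_ne_top_iff_integrable (by fun_prop) ?_).1 hν.ne
  filter_upwards [ae_restrict_mem measurableSet_Ioi] with t ht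
  exact le_min zero_le_one (le_of_lt ht)

end LevyKhintchine

theorem stmt_6_general {S : Set ℝ} {φ φ' : ℝ → ℝ} (hS : S ⊆ Ici 0)
    (hφpos : ∀ x ∈ S, 0 < φ x) (hderiv : ∀ x ∈ S, HasDerivWithinAt φ (φ' x) S x)
    (hconc : ConcaveOn ℝ S fun x => x / φ x) :
    MonotoneOn (fun x => x ^ 2 * φ' x / φ x ^ 2) S ∧
      (MonotoneOn φ S → MonotoneOn (fun x => x ^ 2 * φ' x) S) :=
  ⟨monotoneOn_sq_mul_deriv_div_sq_of_concaveOn_div hS (fun x hx => (hφpos x hx).ne') hderiv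
      hconc,
    monotoneOn_sq_mul_deriv_of_concaveOn_div hS hφpos hderiv hconc⟩

/-- If `φ : (0,∞) → (0,∞)` is differentiable and
`λ/φ(λ) = θ + ∫_{(0,∞)} (1 − e^{−λt}) ν(dt)` with `θ ≥ 0` and a Borel measure
`ν` on `(0,∞)` with `∫ (1 ∧ t) ν(dt) < ∞`, then `η₂(λ) = λ² φ'(λ)/φ(λ)²` is
increasing on `(0,∞)`, and if moreover `φ` is increasing, then
`η₁(λ) = λ² φ'(λ)` is increasing on `(0,∞)` as well. -/
theorem stmt_6 (φ φ' : ℝ → ℝ) (θ : ℝ) (ν : Measure ℝ)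
    (hφpos : ∀ l : ℝ, 0 < l → 0 < φ l)
    (hderiv : ∀ l : ℝ, 0 < l → HasDerivAt φ (φ' l) l)
    (hθ : 0 ≤ θ)
    (hν : ∫⁻ t in Ioi (0:ℝ), ENNReal.ofReal (min 1 t) ∂ν < ⊤)
    (hrep : ∀ l : ℝ, 0 < l →
      l / φ l = θ + ∫ t in Ioi (0:ℝ), (1 - Real.exp (-(l * t))) ∂ν) :
    (∀ s t : ℝ, 0 < s → s ≤ t →
        s ^ 2 * φ' s / (φ s) ^ 2 ≤ t ^ 2 * φ' t / (φ t) ^ 2) ∧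
    ((∀ s t : ℝ, 0 < s → s ≤ t → φ s ≤ φ t) →
      ∀ s t : ℝ, 0 < s → s ≤ t → s ^ 2 * φ' s ≤ t ^ 2 * φ' t) := by
  have hconc : ConcaveOn ℝ (Ioi 0) fun l => l / φ l :=
    ((concaveOn_const_add_integral_one_sub_exp_neg_mul θ
      (integrableOn_min_one_of_lintegral_lt_top hν)).subset Ioi_subset_Ici_self
        (convex_Ioi 0)).congr fun l hl => (hrep l hl).symm
  obtain ⟨hη₂, hη₁⟩ := stmt_6_general Ioi_subset_Ici_self hφpos
    (fun l hl => (hderiv l hl).hasDerivWithinAt) hconc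
  exact ⟨fun s t hs hst => hη₂ hs (hs.trans_le hst) hst, fun hmono s t hs hst =>
    hη₁ (fun x hx y _ => hmono x y hx) hs (hs.trans_le hst) hst⟩
end

section
/- Let d ≥ 1 be an integer. Let μ : (0,∞) → (0,∞) be decreasing with ∫₀^∞ (1 ∧ t) μ(t) dt < ∞, define φ(λ) = ∫₀^∞ (1 − e^{−λt}) μ(t) dt, and assume φ' is decreasing, λ ↦ λ² φ'(λ) is increasing on (0,∞), and there exist σ > 0, λ₀ > 0 and δ ∈ (0,1] such that φ'(λx) ≤ σ x^{−δ} φ'(λ) for all x ≥ 1 and λ ≥ λ₀. When d ≤ 2, assume additionally that d + 2δ − 2 > 0 and there exist σ' > 0 and δ' with 1 − d/2 < δ' < min(1 + d/2, 2δ + (d−2)/2) such that φ'(λx) ≥ σ' x^{−δ'} φ'(λ) for all x ≥ 1 and λ ≥ λ₀. Then the function j(r) = ∫₀^∞ (4πt)^{−d/2} exp(−r²/(4t)) μ(t) dt satisfies j(r) ≍ r^{−d−2} φ'(r^{−2}) as r → 0+, i.e. there exist constants c₁, c₂ > 0 and r₀ ∈ (0,1) with c₁ r^{−d−2} φ'(r^{−2})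 ≤ j(r) ≤ c₂ r^{−d−2} φ'(r^{−2}) for all 0 < r < r₀. -/
open MeasureTheory Real Set

/-!
Write `Φ` for the derivative of the Laplace exponent, so `Φ(l) = ∫ t e^{-lt} μ(t) dt`. For a
decreasing density, `μ(a)` is comparable to `a⁻² Φ(a⁻¹)` as `a → 0+`: the upper bound integrates
over `(a/2, a]` only, and for the lower bound one splits `Φ(κ/a)` at `t = a`, where upper scaling
with `κ` small makes the part below `a` at most half of the total.

The substitution `R = r²` turns `j(r)` into a multiple of `∫ t^{-q} e^{-R/(4t)} μ(t) dt` with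
`q = d/2`, and both bounds say that this integral is of the order of the contribution of `t ≈ R`.
Below `R` the exponential compensates `t^{-q-2}`, and above `R` lower scaling with exponent
`δ' < q + 1` bounds the integrand by a multiple of the integrable power `t^{δ'-q-2}`. For `d > 2`
one may take `δ' = 2`, since `l² Φ(l) = ∫ s e^{-s} μ(s/l) ds` is increasing in `l`.
-/

section RealAnalysis

variable {f : ℝ → ℝ} {a b c p x δ : ℝ}

theorem mul_half_le_integral_Ioi (ha : 0 < a) (hf : IntegrableOn f (Ioi 0))
    (hf0 : ∀ t, 0 < t → 0 ≤ f t) (hc : ∀ t ∈ Ioc (a / 2) a, c ≤ f t) :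
    c * (a / 2) ≤ ∫ t in Ioi (0 : ℝ), f t := by
  have hsub : Ioc (a / 2) a ⊆ Ioi (0 : ℝ) := fun t ht ↦ (half_pos ha).trans ht.1
  calc c * (a / 2) = ∫ _ in Ioc (a / 2) a, c := by
        rw [setIntegral_const, Real.volume_real_Ioc_of_le (by linarith), smul_eq_mul]; ring
    _ ≤ ∫ t in Ioc (a / 2) a, f t :=
        setIntegral_mono_on (integrableOn_const (by simp)) (hf.mono_set hsub) measurableSet_Ioc hc
    _ ≤ ∫ t in Ioi (0 : ℝ), f t :=
        setIntegral_mono_set hf (ae_restrict_of_forall_mem measurableSet_Ioi hf0)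
          hsub.eventuallyLE

theorem integral_mul_exp_neg_mul_Ioi (hb : 0 < b) :
    ∫ t in Ioi (0 : ℝ), t * exp (-(b * t)) = (b ^ 2)⁻¹ := by
  have h := integral_rpow_mul_exp_neg_mul_Ioi two_pos hb
  simpa only [show (2 : ℝ) - 1 = 1 by norm_num, rpow_one, rpow_two, Real.Gamma_two, mul_one,
    one_div, inv_pow] using h

theorem integrableOn_mul_exp_neg_mul_Ioi (hb : 0 < b) :
    IntegrableOn (fun t : ℝ ↦ t * exp (-(b * t))) (Ioi 0) :=
  .of_integral_ne_zero (by rw [integral_mul_exp_neg_mul_Ioi hb]; positivity)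

theorem rpow_mul_exp_neg_mul_le (hp : 0 ≤ p) (hb : 0 < b) (hx : 0 ≤ x) :
    x ^ p * exp (-(b * x)) ≤ (p / b) ^ p := by
  rcases hp.eq_or_lt with rfl | hp
  · simp only [rpow_zero, one_mul, exp_le_one_iff]
    nlinarith
  have hx_le : x ≤ p / b * exp (b * x / p) :=
    calc x = p / b * (b * x / p) := by field_simp
      _ ≤ p / b * exp (b * x / p) := by gcongr; linarith [add_one_le_exp (b * x / p)]
  calc x ^ p * exp (-(b * x)) ≤ (p / b * exp (b * x / p)) ^ p * exp (-(b * x)) := by gcongr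
    _ = (p / b) ^ p := by
        rw [mul_rpow (by positivity) (exp_pos _).le, ← exp_mul, div_mul_cancel₀ _ hp.ne',
          mul_assoc, ← exp_add, add_neg_cancel, exp_zero, mul_one]

theorem exists_rpow_le (hδ : 0 < δ) (hc : 0 < c) : ∃ κ ∈ Ioc (0 : ℝ) 1, κ ^ δ ≤ c := by
  refine ⟨min 1 (c ^ δ⁻¹), ⟨by positivity, min_le_left _ _⟩, ?_⟩
  calc (min 1 (c ^ δ⁻¹)) ^ δ ≤ (c ^ δ⁻¹) ^ δ := by gcongr; exact min_le_right _ _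
    _ = c := rpow_inv_rpow hc.le hδ.ne'

end RealAnalysis

section Scaling

variable {f g : ℝ → ℝ} {C δ l₀ a b : ℝ}

/-- Weak upper scaling of `f` at infinity with exponent `-δ`, as in condition (A-3). -/
def HasUpperScaling (f : ℝ → ℝ) (C δ l₀ : ℝ) : Prop :=
  ∀ x : ℝ, 1 ≤ x → ∀ l : ℝ, l₀ ≤ l → f (l * x) ≤ C * x ^ (-δ) * f l

/-- Weak lower scaling of `f` at infinity with exponent `-δ`, as in condition (B). -/
def HasLowerScaling (f : ℝ → ℝ) (C δ l₀ : ℝ) : Prop :=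
  ∀ x : ℝ, 1 ≤ x → ∀ l : ℝ, l₀ ≤ l → C * x ^ (-δ) * f l ≤ f (l * x)

theorem HasUpperScaling.congr (hf : HasUpperScaling f C δ l₀) (hl₀ : 0 < l₀)
    (hfg : EqOn f g (Ioi 0)) : HasUpperScaling g C δ l₀ := fun x hx l hl ↦ by
  have hl0 : 0 < l := hl₀.trans_le hl
  have hlx : 0 < l * x := by positivity
  simpa only [← hfg hl0, ← hfg hlx] using hf x hx l hl

theorem HasLowerScaling.congr (hf : HasLowerScaling f C δ l₀) (hl₀ : 0 < l₀)
    (hfg : EqOn f g (Ioi 0)) : HasLowerScaling g C δ l₀ := fun x hx l hl ↦ by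
  have hl0 : 0 < l := hl₀.trans_le hl
  have hlx : 0 < l * x := by positivity
  simpa only [← hfg hl0, ← hfg hlx] using hf x hx l hl

theorem HasUpperScaling.le_mul_rpow (hf : HasUpperScaling f C δ l₀) (hl₀ : 0 < l₀) (ha : l₀ ≤ a)
    (hab : a ≤ b) : f b ≤ C * (a / b) ^ δ * f a := by
  have ha0 : 0 < a := hl₀.trans_le ha
  have hb0 : 0 < b := ha0.trans_le hab
  have h := hf (b / a) ((one_le_div ha0).2 hab) a ha
  rwa [mul_div_cancel₀ _ ha0.ne', rpow_neg (by positivity), ← inv_rpow (by positivity),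
    inv_div] at h

theorem HasLowerScaling.le_mul_rpow (hf : HasLowerScaling f C δ l₀) (hC : 0 < C) (hl₀ : 0 < l₀)
    (ha : l₀ ≤ a) (hab : a ≤ b) : f a ≤ C⁻¹ * (b / a) ^ δ * f b := by
  have ha0 : 0 < a := hl₀.trans_le ha
  have hb0 : 0 < b := ha0.trans_le hab
  have h := hf (b / a) ((one_le_div ha0).2 hab) a ha
  rw [mul_div_cancel₀ _ ha0.ne', rpow_neg (by positivity)] at h
  calc f a = C⁻¹ * (b / a) ^ δ * (C * ((b / a) ^ δ)⁻¹ * f a) := by field_simp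
    _ ≤ C⁻¹ * (b / a) ^ δ * f b := by gcongr

theorem hasLowerScaling_two_of_monotoneOn_sq_mul
    (hf : MonotoneOn (fun l ↦ l ^ 2 * f l) (Ioi 0)) (hl₀ : 0 < l₀) :
    HasLowerScaling f 1 2 l₀ := by
  intro x hx l hl
  have hl0 : 0 < l := hl₀.trans_le hl
  have hlx : l ≤ l * x := le_mul_of_one_le_right hl0.le hx
  have h : l ^ 2 * f l ≤ (l * x) ^ 2 * f (l * x) := hf hl0 (hl0.trans_le hlx) hlx
  rw [one_mul, rpow_neg (by positivity), rpow_two, inv_mul_le_iff₀ (by positivity)]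
  refine le_of_mul_le_mul_left ?_ (by positivity : 0 < l ^ 2)
  linarith

end Scaling

section HeatProfile

variable {q p R t : ℝ}

/-- The heat kernel of `ℝ^d` at distance `r` and time `t`, without its factor `(4π)^{-d/2}`, in
terms of `q = d / 2` and `R = r ^ 2`. -/
noncomputable def heatProfile (q R t : ℝ) : ℝ := t ^ (-q) * exp (-(R / (4 * t)))

theorem measurable_heatProfile : Measurable (heatProfile q R) := by
  unfold heatProfile; fun_prop

theorem heatProfile_nonneg (ht : 0 ≤ t) : 0 ≤ heatProfile q R t := by
  unfold heatProfile; positivity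

theorem heatProfile_add (ht : 0 < t) : heatProfile (q + p) R t = heatProfile q R t * t ^ (-p) := by
  rw [heatProfile, heatProfile, neg_add, rpow_add ht]; ring

theorem heatProfile_le_rpow_neg (hR : 0 ≤ R) (ht : 0 < t) : heatProfile q R t ≤ t ^ (-q) :=
  mul_le_of_le_one_right (by positivity) (exp_le_one_iff.2 (neg_nonpos.2 (by positivity)))

theorem heatProfile_le (hq : 0 ≤ q) (hR : 0 < R) (ht : 0 < t) :
    heatProfile q R t ≤ (4 * q) ^ q * R ^ (-q) := by
  have h := rpow_mul_exp_neg_mul_le hq (by positivity : 0 < R / 4) (by positivity : 0 ≤ t⁻¹)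
  rw [inv_rpow ht.le, ← rpow_neg ht.le] at h
  calc heatProfile q R t = t ^ (-q) * exp (-(R / 4 * t⁻¹)) := by
        rw [heatProfile]; congr 3; field_simp
    _ ≤ (q / (R / 4)) ^ q := h
    _ = (4 * q) ^ q * R ^ (-q) := by
        rw [div_div_eq_mul_div, mul_comm q, div_rpow (by positivity) hR.le, rpow_neg hR.le,
          div_eq_mul_inv]

theorem exists_heatProfile_le_mul_min (hq : 0 ≤ q) (hR : 0 < R) :
    ∃ C, ∀ t, 0 < t → heatProfile q R t ≤ C * min 1 t := by
  refine ⟨max ((4 * q) ^ q * R ^ (-q)) ((4 * (q + 1)) ^ (q + 1) * R ^ (-(q + 1))),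
    fun t ht ↦ ?_⟩
  rcases le_total 1 t with h | h
  · rw [min_eq_left h, mul_one]
    exact (heatProfile_le hq hR ht).trans (le_max_left _ _)
  · rw [min_eq_right h]
    calc heatProfile q R t = heatProfile (q + 1) R t * t := by
          rw [heatProfile_add ht, rpow_neg_one, inv_mul_cancel_right₀ ht.ne']
      _ ≤ (4 * (q + 1)) ^ (q + 1) * R ^ (-(q + 1)) * t := by
          gcongr; exact heatProfile_le (by linarith) hR ht
      _ ≤ _ := by gcongr; exact le_max_right _ _

theorem rpow_neg_mul_exp_le_heatProfile (hq : 0 ≤ q) (hR : 0 < R) (ht : t ∈ Ioc (R / 2) R) :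
    R ^ (-q) * exp (-(1 / 2)) ≤ heatProfile q R t := by
  have ht0 : 0 < t := (half_pos hR).trans ht.1
  have hRt : R / (4 * t) ≤ 1 / 2 := by
    rw [div_le_iff₀ (by positivity)]; linarith [ht.1]
  exact mul_le_mul (rpow_le_rpow_of_nonpos ht0 ht.2 (by linarith)) (by gcongr) (exp_pos _).le
    (by positivity)

end HeatProfile

/-- Decreasing Lévy densities on `(0, ∞)`, as in condition (A-2). Values outside `(0, ∞)` are
irrelevant. -/
structure IsDecreasingLevyDensity (μ : ℝ → ℝ) : Prop where
  nonneg : ∀ t, 0 < t → 0 ≤ μ t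
  antitoneOn : AntitoneOn μ (Ioi 0)
  integrableOn_min_mul : IntegrableOn (fun t ↦ min 1 t * μ t) (Ioi 0)

/-- The Laplace exponent `φ` of the driftless subordinator with Lévy density `μ`. -/
noncomputable def laplaceExponent (μ : ℝ → ℝ) (l : ℝ) : ℝ :=
  ∫ t in Ioi (0 : ℝ), (1 - exp (-(l * t))) * μ t

/-- The derivative `φ'` of the Laplace exponent, as an integral over the Lévy density. -/
noncomputable def laplaceExponentDeriv (μ : ℝ → ℝ) (l : ℝ) : ℝ :=
  ∫ t in Ioi (0 : ℝ), t * exp (-(l * t)) * μ t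

/-- The mixture of the heat kernels by the Lévy density `μ`: for `q = d / 2` and `R = r ^ 2` this
is `j(r)` up to the factor `(4π)^{-d/2}`. -/
noncomputable def heatMixture (μ : ℝ → ℝ) (q R : ℝ) : ℝ :=
  ∫ t in Ioi (0 : ℝ), heatProfile q R t * μ t

theorem integral_heatKernel_mul_eq_heatMixture {μ : ℝ → ℝ} {d r : ℝ} :
    ∫ t in Ioi (0 : ℝ), (4 * π * t) ^ (-d / 2) * exp (-(r ^ 2 / (4 * t))) * μ t =
      (4 * π) ^ (-d / 2) * heatMixture μ (d / 2) (r ^ 2) := by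
  rw [heatMixture, ← integral_const_mul]
  refine setIntegral_congr_fun measurableSet_Ioi fun t (ht : 0 < t) ↦ ?_
  simp only [heatProfile]
  rw [mul_rpow (by positivity) ht.le, neg_div]
  ring

namespace IsDecreasingLevyDensity

variable {μ g : ℝ → ℝ} {C a l q R T σ δ l₀ t : ℝ}

section Integrability

theorem aestronglyMeasurable (hμ : IsDecreasingLevyDensity μ) :
    AEStronglyMeasurable μ (volume.restrict (Ioi 0)) :=
  (aemeasurable_restrict_of_antitoneOn measurableSet_Ioi hμ.antitoneOn).aestronglyMeasurable

theorem integrableOn_mul_of_le_min (hμ : IsDecreasingLevyDensity μ) (hg : Measurable g)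
    (hg0 : ∀ t, 0 < t → 0 ≤ g t) (hgC : ∀ t, 0 < t → g t ≤ C * min 1 t) :
    IntegrableOn (fun t ↦ g t * μ t) (Ioi 0) := by
  refine (hμ.integrableOn_min_mul.const_mul C).mono'
    (hg.aestronglyMeasurable.mul hμ.aestronglyMeasurable)
    (ae_restrict_of_forall_mem measurableSet_Ioi fun t ht ↦ ?_)
  rw [norm_of_nonneg (mul_nonneg (hg0 t ht) (hμ.nonneg t ht)), ← mul_assoc]
  exact mul_le_mul_of_nonneg_right (hgC t ht) (hμ.nonneg t ht)

theorem integrableOn_Ioi (hμ : IsDecreasingLevyDensity μ) (hT : 0 < T) :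
    IntegrableOn μ (Ioi T) := by
  have hsub : Ioi T ⊆ Ioi 0 := Ioi_subset_Ioi hT.le
  refine ((hμ.integrableOn_min_mul.mono_set hsub).const_mul (min 1 T)⁻¹).mono'
    (hμ.aestronglyMeasurable.mono_measure (Measure.restrict_mono hsub le_rfl))
    (ae_restrict_of_forall_mem measurableSet_Ioi fun t (ht : T < t) ↦ ?_)
  have hμt : 0 ≤ μ t := hμ.nonneg t (hT.trans ht)
  rw [norm_of_nonneg hμt, ← mul_assoc, inv_mul_eq_div]
  refine le_mul_of_one_le_left hμt ((one_le_div (by positivity)).2 ?_)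
  gcongr

theorem integrableOn_mul_exp_neg_mul (hμ : IsDecreasingLevyDensity μ) (hl : 0 < l) :
    IntegrableOn (fun t ↦ t * exp (-(l * t)) * μ t) (Ioi 0) := by
  refine hμ.integrableOn_mul_of_le_min (C := max 1 (1 / l)) (by fun_prop)
    (fun t ht ↦ by positivity) fun t ht ↦ ?_
  rcases le_total 1 t with h | h
  · rw [min_eq_left h, mul_one]
    have hle := rpow_mul_exp_neg_mul_le zero_le_one hl ht.le
    rw [rpow_one, rpow_one] at hle
    exact hle.trans (le_max_right _ _)
  · rw [min_eq_right h, mul_comm]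
    gcongr
    exact (exp_le_one_iff.2 (neg_nonpos.2 (by positivity))).trans (le_max_left _ _)

theorem integrableOn_one_sub_exp_neg_mul (hμ : IsDecreasingLevyDensity μ) (hl : 0 < l) :
    IntegrableOn (fun t ↦ (1 - exp (-(l * t))) * μ t) (Ioi 0) := by
  refine hμ.integrableOn_mul_of_le_min (C := max 1 l) (by fun_prop) (fun t ht ↦ ?_)
    fun t ht ↦ ?_
  · exact sub_nonneg.2 (exp_le_one_iff.2 (neg_nonpos.2 (by positivity)))
  · rcases le_total 1 t with h | h
    · rw [min_eq_left h]
      linarith [le_max_left 1 l, exp_pos (-(l * t))]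
    · rw [min_eq_right h]
      nlinarith [le_max_right 1 l, add_one_le_exp (-(l * t))]

theorem integrableOn_heatProfile_mul (hμ : IsDecreasingLevyDensity μ) (hq : 0 ≤ q) (hR : 0 < R) :
    IntegrableOn (fun t ↦ heatProfile q R t * μ t) (Ioi 0) :=
  let ⟨_, hC⟩ := exists_heatProfile_le_mul_min hq hR
  hμ.integrableOn_mul_of_le_min measurable_heatProfile (fun _ ht ↦ heatProfile_nonneg ht.le) hC

end Integrability

section LaplaceExponent

theorem hasDerivAt_laplaceExponent (hμ : IsDecreasingLevyDensity μ) (hl : 0 < l) :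
    HasDerivAt (laplaceExponent μ) (laplaceExponentDeriv μ l) l := by
  refine (hasDerivAt_integral_of_dominated_loc_of_deriv_le
    (F := fun k t ↦ (1 - exp (-(k * t))) * μ t) (F' := fun k t ↦ t * exp (-(k * t)) * μ t)
    (bound := fun t ↦ t * exp (-(l / 2 * t)) * μ t) (Ioi_mem_nhds (half_lt_self hl))
    (.of_forall fun k ↦ (Measurable.aestronglyMeasurable (by fun_prop)).mul
      hμ.aestronglyMeasurable)
    (hμ.integrableOn_one_sub_exp_neg_mul hl)
    (hμ.integrableOn_mul_exp_neg_mul hl).aestronglyMeasurable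
    (ae_restrict_of_forall_mem measurableSet_Ioi fun t (ht : 0 < t) k (hk : l / 2 < k) ↦ ?_)
    (hμ.integrableOn_mul_exp_neg_mul (half_pos hl)) (.of_forall fun t k _ ↦ ?_)).2
  · have hμt : 0 ≤ μ t := hμ.nonneg t ht
    rw [norm_of_nonneg (by positivity)]
    gcongr
  · have h : HasDerivAt (fun k : ℝ ↦ -(k * t)) (-t) k := (hasDerivAt_mul_const t).fun_neg
    convert! (h.exp.const_sub 1).mul_const (μ t) using 1
    ring

theorem eqOn_laplaceExponentDeriv (hμ : IsDecreasingLevyDensity μ) {φ φ' : ℝ → ℝ}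
    (hφ : EqOn φ (laplaceExponent μ) (Ioi 0)) (hderiv : ∀ l, 0 < l → HasDerivAt φ (φ' l) l) :
    EqOn φ' (laplaceExponentDeriv μ) (Ioi 0) := fun l hl ↦
  (hderiv l hl).unique ((hμ.hasDerivAt_laplaceExponent hl).congr_of_eventuallyEq
    (hφ.eventuallyEq_of_mem (Ioi_mem_nhds hl)))

theorem laplaceExponentDeriv_nonneg (hμ : IsDecreasingLevyDensity μ) :
    0 ≤ laplaceExponentDeriv μ l :=
  setIntegral_nonneg measurableSet_Ioi fun t (ht : 0 < t) ↦
    mul_nonneg (by positivity) (hμ.nonneg t ht)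

theorem antitoneOn_laplaceExponentDeriv (hμ : IsDecreasingLevyDensity μ) :
    AntitoneOn (laplaceExponentDeriv μ) (Ioi 0) := fun k hk l hl hkl ↦ by
  refine setIntegral_mono_on (hμ.integrableOn_mul_exp_neg_mul hl)
    (hμ.integrableOn_mul_exp_neg_mul hk) measurableSet_Ioi fun t (ht : 0 < t) ↦ ?_
  have hμt : 0 ≤ μ t := hμ.nonneg t ht
  gcongr

theorem sq_mul_laplaceExponentDeriv (hl : 0 < l) :
    l ^ 2 * laplaceExponentDeriv μ l = ∫ s in Ioi (0 : ℝ), s * exp (-s) * μ (s / l) := by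
  have h := integral_comp_mul_left_Ioi (fun s ↦ s * exp (-s) * μ (s / l)) 0 hl
  simp only [mul_zero, mul_div_cancel_left₀ _ hl.ne', mul_assoc, integral_const_mul,
    smul_eq_mul] at h
  simp only [laplaceExponentDeriv, mul_assoc]
  rw [sq, mul_assoc, h, mul_inv_cancel_left₀ hl.ne']

theorem integrableOn_mul_exp_neg_mul_comp_div (hμ : IsDecreasingLevyDensity μ) (hl : 0 < l) :
    IntegrableOn (fun s ↦ s * exp (-s) * μ (s / l)) (Ioi 0) := by
  rw [← mul_zero l, ← integrableOn_Ioi_comp_mul_left_iff _ _ hl]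
  refine IntegrableOn.congr_fun ((hμ.integrableOn_mul_exp_neg_mul hl).const_mul l)
    (fun t _ ↦ ?_) measurableSet_Ioi
  simp only [mul_div_cancel_left₀ _ hl.ne', mul_assoc]

theorem monotoneOn_sq_mul_laplaceExponentDeriv (hμ : IsDecreasingLevyDensity μ) :
    MonotoneOn (fun l ↦ l ^ 2 * laplaceExponentDeriv μ l) (Ioi 0) :=
  fun k (hk : 0 < k) l (hl : 0 < l) hkl ↦ by
  simp only [sq_mul_laplaceExponentDeriv hk, sq_mul_laplaceExponentDeriv hl]
  refine setIntegral_mono_on (hμ.integrableOn_mul_exp_neg_mul_comp_div hk)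
    (hμ.integrableOn_mul_exp_neg_mul_comp_div hl) measurableSet_Ioi fun s (hs : 0 < s) ↦ ?_
  have hμs : μ (s / k) ≤ μ (s / l) := hμ.antitoneOn (div_pos hs hl) (div_pos hs hk) (by gcongr)
  gcongr

end LaplaceExponent

section DensityBounds

theorem density_le (hμ : IsDecreasingLevyDensity μ) (ha : 0 < a) :
    μ a ≤ 4 * exp 1 * (a ^ 2)⁻¹ * laplaceExponentDeriv μ a⁻¹ := by
  have hμa : 0 ≤ μ a := hμ.nonneg a ha
  have h : a / 2 * exp (-1) * μ a * (a / 2) ≤ laplaceExponentDeriv μ a⁻¹ := by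
    refine mul_half_le_integral_Ioi ha (hμ.integrableOn_mul_exp_neg_mul (inv_pos.2 ha))
      (fun t ht ↦ mul_nonneg (by positivity) (hμ.nonneg t ht)) fun t ht ↦ ?_
    have ht0 : 0 < t := (half_pos ha).trans ht.1
    have hat : a⁻¹ * t ≤ 1 := by rw [inv_mul_le_iff₀ ha, mul_one]; exact ht.2
    have hta : a / 2 ≤ t := ht.1.le
    have hμat : μ a ≤ μ t := hμ.antitoneOn ht0 ha ht.2
    gcongr
  calc μ a = 4 * exp 1 * (a ^ 2)⁻¹ * (a / 2 * exp (-1) * μ a * (a / 2)) := by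
        rw [exp_neg]; field_simp; norm_num
    _ ≤ _ := by gcongr

theorem laplaceExponentDeriv_le_add (hμ : IsDecreasingLevyDensity μ) (hl : 0 < l) (ha : 0 < a) :
    laplaceExponentDeriv μ l ≤ exp 1 * laplaceExponentDeriv μ a⁻¹ + μ a * (l ^ 2)⁻¹ := by
  have hleft := (hμ.integrableOn_mul_exp_neg_mul (inv_pos.2 ha)).const_mul (exp 1)
  have hright := (integrableOn_mul_exp_neg_mul_Ioi hl).const_mul (μ a)
  rw [← integral_mul_exp_neg_mul_Ioi hl, laplaceExponentDeriv, laplaceExponentDeriv,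
    ← integral_const_mul, ← integral_const_mul, ← integral_add hleft hright]
  refine setIntegral_mono_on (hμ.integrableOn_mul_exp_neg_mul hl) (hleft.add hright)
    measurableSet_Ioi fun t (ht : 0 < t) ↦ ?_
  have hμt : 0 ≤ μ t := hμ.nonneg t ht
  have hμa : 0 ≤ μ a := hμ.nonneg a ha
  rcases le_total t a with h | h
  · have hexp : exp (-(l * t)) ≤ exp 1 * exp (-(a⁻¹ * t)) := by
      rw [← exp_add, exp_le_exp]
      have : a⁻¹ * t ≤ 1 := by rwa [inv_mul_le_iff₀ ha, mul_one]
      nlinarith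
    calc t * exp (-(l * t)) * μ t ≤ t * (exp 1 * exp (-(a⁻¹ * t))) * μ t := by gcongr
      _ = exp 1 * (t * exp (-(a⁻¹ * t)) * μ t) := by ring
      _ ≤ _ := le_add_of_nonneg_right (by positivity)
  · calc t * exp (-(l * t)) * μ t ≤ t * exp (-(l * t)) * μ a := by
          gcongr; exact hμ.antitoneOn ha ht h
      _ = μ a * (t * exp (-(l * t))) := by ring
      _ ≤ _ := le_add_of_nonneg_left (by positivity)

theorem exists_le_density (hμ : IsDecreasingLevyDensity μ)
    (hup : HasUpperScaling (laplaceExponentDeriv μ) σ δ l₀) (hσ : 0 < σ) (hδ : 0 < δ)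
    (hl₀ : 0 < l₀) :
    ∃ c > 0, ∃ a₀ > 0, ∀ a ∈ Ioc 0 a₀, c * (a ^ 2)⁻¹ * laplaceExponentDeriv μ a⁻¹ ≤ μ a := by
  obtain ⟨κ, ⟨hκ, hκ1⟩, hκδ⟩ := exists_rpow_le hδ (c := (2 * exp 1 * σ)⁻¹) (by positivity)
  refine ⟨κ ^ 2 / 2, by positivity, κ / l₀, by positivity, fun a ⟨ha, haa⟩ ↦ ?_⟩
  have hκa : 0 < κ / a := by positivity
  have hl₀κ : l₀ ≤ κ / a := (le_div_comm₀ ha hl₀).1 haa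
  have hκa_le : κ / a ≤ a⁻¹ := by rw [← one_div]; gcongr
  have hnonneg : 0 ≤ laplaceExponentDeriv μ (κ / a) := hμ.laplaceExponentDeriv_nonneg
  have hsplit := hμ.laplaceExponentDeriv_le_add hκa ha
  have hhalf : exp 1 * laplaceExponentDeriv μ a⁻¹ ≤ laplaceExponentDeriv μ (κ / a) / 2 := by
    have h := hup.le_mul_rpow hl₀ hl₀κ hκa_le
    rw [show κ / a / a⁻¹ = κ by field_simp] at h
    calc exp 1 * laplaceExponentDeriv μ a⁻¹
        ≤ exp 1 * (σ * κ ^ δ * laplaceExponentDeriv μ (κ / a)) := by gcongr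
      _ ≤ exp 1 * (σ * (2 * exp 1 * σ)⁻¹ * laplaceExponentDeriv μ (κ / a)) := by gcongr
      _ = laplaceExponentDeriv μ (κ / a) / 2 := by field_simp
  have hanti : laplaceExponentDeriv μ a⁻¹ ≤ laplaceExponentDeriv μ (κ / a) :=
    hμ.antitoneOn_laplaceExponentDeriv hκa (inv_pos.2 ha) hκa_le
  calc κ ^ 2 / 2 * (a ^ 2)⁻¹ * laplaceExponentDeriv μ a⁻¹
      = (κ / a) ^ 2 * (laplaceExponentDeriv μ a⁻¹ / 2) := by ring
    _ ≤ (κ / a) ^ 2 * (μ a * ((κ / a) ^ 2)⁻¹) := by gcongr; linarith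
    _ = μ a := by field_simp

end DensityBounds

section HeatMixture

theorem exists_le_heatMixture (hμ : IsDecreasingLevyDensity μ)
    (hup : HasUpperScaling (laplaceExponentDeriv μ) σ δ l₀) (hσ : 0 < σ) (hδ : 0 < δ)
    (hl₀ : 0 < l₀) (hq : 0 ≤ q) :
    ∃ c > 0, ∃ R₀ > 0, ∀ R ∈ Ioc 0 R₀,
      c * R ^ (-q - 1) * laplaceExponentDeriv μ R⁻¹ ≤ heatMixture μ q R := by
  obtain ⟨c, hc, R₀, hR₀, hdensity⟩ := hμ.exists_le_density hup hσ hδ hl₀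
  refine ⟨exp (-(1 / 2)) * c / 2, by positivity, R₀, hR₀, fun R hR ↦ ?_⟩
  have hR0 : 0 < R := hR.1
  have hμR : 0 ≤ μ R := hμ.nonneg R hR0
  calc exp (-(1 / 2)) * c / 2 * R ^ (-q - 1) * laplaceExponentDeriv μ R⁻¹
      = R ^ (-q) * exp (-(1 / 2)) * (c * (R ^ 2)⁻¹ * laplaceExponentDeriv μ R⁻¹) * (R / 2) := by
        rw [rpow_sub_one hR0.ne']; field_simp
    _ ≤ R ^ (-q) * exp (-(1 / 2)) * μ R * (R / 2) := by gcongr; exact hdensity R hR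
    _ ≤ heatMixture μ q R := by
        refine mul_half_le_integral_Ioi hR0 (hμ.integrableOn_heatProfile_mul hq hR0)
          (fun t ht ↦ mul_nonneg (heatProfile_nonneg ht.le) (hμ.nonneg t ht)) fun t ht ↦ ?_
        have ht0 : 0 < t := (half_pos hR0).trans ht.1
        exact mul_le_mul (rpow_neg_mul_exp_le_heatProfile hq hR0 ht)
          (hμ.antitoneOn ht0 hR0 ht.2) hμR (heatProfile_nonneg ht0.le)

theorem heatProfile_mul_density_le (hμ : IsDecreasingLevyDensity μ) (ht : 0 < t) :
    heatProfile q R t * μ t ≤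
      4 * exp 1 * heatProfile (q + 2) R t * laplaceExponentDeriv μ t⁻¹ :=
  calc heatProfile q R t * μ t
      ≤ heatProfile q R t * (4 * exp 1 * (t ^ 2)⁻¹ * laplaceExponentDeriv μ t⁻¹) :=
        mul_le_mul_of_nonneg_left (hμ.density_le ht) (heatProfile_nonneg ht.le)
    _ = _ := by rw [heatProfile_add ht, rpow_neg ht.le, rpow_two]; ring

theorem setIntegral_Ioc_zero_heatProfile_mul_le (hμ : IsDecreasingLevyDensity μ) (hq : 0 ≤ q)
    (hR : 0 < R) :
    ∫ t in Ioc 0 R, heatProfile q R t * μ t ≤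
      4 * exp 1 * (4 * (q + 2)) ^ (q + 2) * R ^ (-q - 1) * laplaceExponentDeriv μ R⁻¹ := by
  set K := 4 * exp 1 * ((4 * (q + 2)) ^ (q + 2) * R ^ (-(q + 2))) * laplaceExponentDeriv μ R⁻¹
  have hpointwise : ∀ t ∈ Ioc 0 R, heatProfile q R t * μ t ≤ K := fun t ⟨ht, htR⟩ ↦ by
    refine (hμ.heatProfile_mul_density_le ht).trans ?_
    have hanti : laplaceExponentDeriv μ t⁻¹ ≤ laplaceExponentDeriv μ R⁻¹ :=
      hμ.antitoneOn_laplaceExponentDeriv (inv_pos.2 hR) (inv_pos.2 ht) (inv_anti₀ ht htR)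
    have hprofile := heatProfile_le (by linarith : 0 ≤ q + 2) hR ht
    exact mul_le_mul (mul_le_mul_of_nonneg_left hprofile (by positivity)) hanti
      hμ.laplaceExponentDeriv_nonneg (by positivity)
  calc ∫ t in Ioc 0 R, heatProfile q R t * μ t ≤ ∫ _ in Ioc 0 R, K :=
        setIntegral_mono_on ((hμ.integrableOn_heatProfile_mul hq hR).mono_set Ioc_subset_Ioi_self)
          (integrableOn_const (by simp)) measurableSet_Ioc hpointwise
    _ = R * K := by
        rw [setIntegral_const, Real.volume_real_Ioc_of_le hR.le, smul_eq_mul, sub_zero]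
    _ = _ := by
        rw [show -q - 1 = -(q + 2) + 1 by ring, rpow_add_one hR.ne']; ring

theorem setIntegral_Ioc_heatProfile_mul_le (hμ : IsDecreasingLevyDensity μ)
    (hlow : HasLowerScaling (laplaceExponentDeriv μ) σ δ l₀) (hσ : 0 < σ) (hl₀ : 0 < l₀)
    (hq : 0 ≤ q) (hδq : δ < q + 1) (hR : 0 < R) :
    ∫ t in Ioc R l₀⁻¹, heatProfile q R t * μ t ≤
      4 * exp 1 * σ⁻¹ * (q + 1 - δ)⁻¹ * R ^ (-q - 1) * laplaceExponentDeriv μ R⁻¹ := by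
  have hnonneg : 0 ≤ laplaceExponentDeriv μ R⁻¹ := hμ.laplaceExponentDeriv_nonneg
  have hexp : δ - (q + 2) < -1 := by linarith
  set K := 4 * exp 1 * σ⁻¹ * R ^ (-δ) * laplaceExponentDeriv μ R⁻¹ with hK
  have hK0 : 0 ≤ K := by positivity
  have hpow : IntegrableOn (fun t ↦ K * t ^ (δ - (q + 2))) (Ioi R) :=
    (integrableOn_Ioi_rpow_of_lt hexp hR).const_mul K
  have hpointwise : ∀ t ∈ Ioc R l₀⁻¹, heatProfile q R t * μ t ≤ K * t ^ (δ - (q + 2)) :=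
    fun t ⟨htR, htl⟩ ↦ by
    have ht : 0 < t := hR.trans htR
    have hscale : laplaceExponentDeriv μ t⁻¹ ≤ σ⁻¹ * (t / R) ^ δ * laplaceExponentDeriv μ R⁻¹ := by
      simpa only [inv_div_inv] using hlow.le_mul_rpow hσ hl₀ ((le_inv_comm₀ hl₀ ht).2 htl)
        (inv_anti₀ hR htR.le)
    calc heatProfile q R t * μ t
        ≤ 4 * exp 1 * heatProfile (q + 2) R t * laplaceExponentDeriv μ t⁻¹ :=
          hμ.heatProfile_mul_density_le ht
      _ ≤ 4 * exp 1 * t ^ (-(q + 2)) * (σ⁻¹ * (t / R) ^ δ * laplaceExponentDeriv μ R⁻¹) := by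
          gcongr
          · exact hμ.laplaceExponentDeriv_nonneg
          · exact heatProfile_le_rpow_neg hR.le ht
      _ = K * t ^ (δ - (q + 2)) := by
          rw [hK, div_rpow ht.le hR.le, rpow_neg hR.le, sub_eq_add_neg δ, rpow_add ht]; ring
  calc ∫ t in Ioc R l₀⁻¹, heatProfile q R t * μ t
      ≤ ∫ t in Ioc R l₀⁻¹, K * t ^ (δ - (q + 2)) :=
        setIntegral_mono_on ((hμ.integrableOn_heatProfile_mul hq hR).mono_set
          fun t ht ↦ hR.trans ht.1) (hpow.mono_set Ioc_subset_Ioi_self) measurableSet_Ioc hpointwise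
    _ ≤ ∫ t in Ioi R, K * t ^ (δ - (q + 2)) :=
        setIntegral_mono_set hpow (ae_restrict_of_forall_mem measurableSet_Ioi
          fun t (ht : R < t) ↦ mul_nonneg hK0 (rpow_nonneg (hR.trans ht).le _))
          Ioc_subset_Ioi_self.eventuallyLE
    _ = _ := by
        rw [integral_const_mul, integral_Ioi_rpow_of_lt hexp hR, hK,
          show δ - (q + 2) + 1 = -(q + 1 - δ) by ring, neg_div_neg_eq,
          show -q - 1 = -δ + -(q + 1 - δ) by ring, rpow_add hR]
        ring

theorem setIntegral_Ioi_heatProfile_mul_le (hμ : IsDecreasingLevyDensity μ) (hq : 0 ≤ q)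
    (hR : 0 < R) (hT : 0 < T) :
    ∫ t in Ioi T, heatProfile q R t * μ t ≤ T ^ (-q) * ∫ t in Ioi T, μ t := by
  rw [← integral_const_mul]
  refine setIntegral_mono_on
    ((hμ.integrableOn_heatProfile_mul hq hR).mono_set (Ioi_subset_Ioi hT.le))
    ((hμ.integrableOn_Ioi hT).const_mul _) measurableSet_Ioi fun t (ht : T < t) ↦ ?_
  have ht0 : 0 < t := hT.trans ht
  exact mul_le_mul_of_nonneg_right ((heatProfile_le_rpow_neg hR.le ht0).trans
    (rpow_le_rpow_of_nonpos hT ht.le (by linarith))) (hμ.nonneg t ht0)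

theorem laplaceExponentDeriv_le_mul_rpow (hμ : IsDecreasingLevyDensity μ)
    (hlow : HasLowerScaling (laplaceExponentDeriv μ) σ δ l₀) (hσ : 0 < σ) (hl₀ : 0 < l₀)
    (hδq : δ ≤ q + 1) (hR : 0 < R) (hRl : R ≤ l₀⁻¹) :
    laplaceExponentDeriv μ l₀ ≤
      σ⁻¹ * l₀ ^ (-q - 1) * R ^ (-q - 1) * laplaceExponentDeriv μ R⁻¹ := by
  have hnonneg : 0 ≤ laplaceExponentDeriv μ R⁻¹ := hμ.laplaceExponentDeriv_nonneg
  have hlR : l₀ ≤ R⁻¹ := (le_inv_comm₀ hl₀ hR).2 hRl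
  calc laplaceExponentDeriv μ l₀ ≤ σ⁻¹ * (R⁻¹ / l₀) ^ δ * laplaceExponentDeriv μ R⁻¹ :=
        hlow.le_mul_rpow hσ hl₀ le_rfl hlR
    _ ≤ σ⁻¹ * (R⁻¹ / l₀) ^ (q + 1) * laplaceExponentDeriv μ R⁻¹ := by
        gcongr; exact (one_le_div hl₀).2 hlR
    _ = _ := by
        rw [div_rpow (by positivity) hl₀.le, inv_rpow hR.le, ← rpow_neg hR.le, div_eq_mul_inv,
          ← rpow_neg hl₀.le, neg_add']
        ring

theorem heatMixture_eq_add_add (hμ : IsDecreasingLevyDensity μ) (hq : 0 ≤ q) (hR : 0 < R)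
    (hRT : R ≤ T) :
    heatMixture μ q R = (∫ t in Ioc 0 R, heatProfile q R t * μ t) +
      (∫ t in Ioc R T, heatProfile q R t * μ t) + ∫ t in Ioi T, heatProfile q R t * μ t := by
  have hint := hμ.integrableOn_heatProfile_mul hq hR
  have hintR := hint.mono_set (Ioi_subset_Ioi hR.le)
  rw [heatMixture, ← Ioc_union_Ioi_eq_Ioi hR.le,
    setIntegral_union (Ioc_disjoint_Ioi le_rfl) measurableSet_Ioi
      (hint.mono_set Ioc_subset_Ioi_self) hintR,
    ← Ioc_union_Ioi_eq_Ioi hRT,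
    setIntegral_union (Ioc_disjoint_Ioi le_rfl) measurableSet_Ioi
      (hintR.mono_set Ioc_subset_Ioi_self) (hintR.mono_set (Ioi_subset_Ioi hRT)), add_assoc]

theorem exists_heatMixture_le (hμ : IsDecreasingLevyDensity μ)
    (hlow : HasLowerScaling (laplaceExponentDeriv μ) σ δ l₀) (hσ : 0 < σ) (hl₀ : 0 < l₀)
    (hpos : 0 < laplaceExponentDeriv μ l₀) (hq : 0 ≤ q) (hδq : δ < q + 1) :
    ∃ c > 0, ∀ R ∈ Ioc 0 l₀⁻¹,
      heatMixture μ q R ≤ c * R ^ (-q - 1) * laplaceExponentDeriv μ R⁻¹ := by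
  have hT : 0 < l₀⁻¹ := inv_pos.2 hl₀
  have : 0 < q + 1 - δ := by linarith
  set M := ∫ t in Ioi l₀⁻¹, μ t
  have hM : 0 ≤ M := setIntegral_nonneg measurableSet_Ioi fun t ht ↦ hμ.nonneg t (hT.trans ht)
  set m := l₀⁻¹ ^ (-q) * M / laplaceExponentDeriv μ l₀
  refine ⟨4 * exp 1 * (4 * (q + 2)) ^ (q + 2) + 4 * exp 1 * σ⁻¹ * (q + 1 - δ)⁻¹ +
    m * (σ⁻¹ * l₀ ^ (-q - 1)), by positivity, fun R ⟨hR, hRl⟩ ↦ ?_⟩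
  have htail : ∫ t in Ioi l₀⁻¹, heatProfile q R t * μ t ≤
      m * (σ⁻¹ * l₀ ^ (-q - 1)) * R ^ (-q - 1) * laplaceExponentDeriv μ R⁻¹ :=
    calc ∫ t in Ioi l₀⁻¹, heatProfile q R t * μ t
        ≤ l₀⁻¹ ^ (-q) * M := hμ.setIntegral_Ioi_heatProfile_mul_le hq hR hT
      _ = m * laplaceExponentDeriv μ l₀ := (div_mul_cancel₀ _ hpos.ne').symm
      _ ≤ m * (σ⁻¹ * l₀ ^ (-q - 1) * R ^ (-q - 1) * laplaceExponentDeriv μ R⁻¹) := by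
          gcongr; exact hμ.laplaceExponentDeriv_le_mul_rpow hlow hσ hl₀ hδq.le hR hRl
      _ = _ := by ring
  rw [hμ.heatMixture_eq_add_add hq hR hRl]
  linarith [hμ.setIntegral_Ioc_zero_heatProfile_mul_le hq hR,
    hμ.setIntegral_Ioc_heatProfile_mul_le hlow hσ hl₀ hq hδq hR]

end HeatMixture

end IsDecreasingLevyDensity

theorem stmt_7_general {d : ℝ} (hd : 0 ≤ d) {μ φ φ' : ℝ → ℝ} {σ lam₀ δ : ℝ}
    (hμnonneg : ∀ t : ℝ, 0 < t → 0 ≤ μ t)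
    (hμdec : ∀ s t : ℝ, 0 < s → s ≤ t → μ t ≤ μ s)
    (hμint : IntegrableOn (fun t ↦ min 1 t * μ t) (Ioi 0))
    (hφ : ∀ l : ℝ, 0 < l → φ l = ∫ t in Ioi (0 : ℝ), (1 - exp (-(l * t))) * μ t)
    (hderiv : ∀ l : ℝ, 0 < l → HasDerivAt φ (φ' l) l)
    (hlam₀ : 0 < lam₀) (hφ'pos : 0 < φ' lam₀) (hσ : 0 < σ) (hδ : 0 < δ)
    (hA3 : HasUpperScaling φ' σ δ lam₀)
    (hB : d ≤ 2 → ∃ σ' > 0, ∃ δ' < 1 + d / 2, HasLowerScaling φ' σ' δ' lam₀) :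
    ∃ c₁ : ℝ, 0 < c₁ ∧ ∃ c₂ : ℝ, 0 < c₂ ∧ ∃ r₀ : ℝ, r₀ ∈ Ioo (0 : ℝ) 1 ∧
      ∀ r : ℝ, 0 < r → r < r₀ →
        c₁ * r ^ (-d - 2) * φ' ((r ^ 2)⁻¹)
            ≤ (∫ t in Ioi (0 : ℝ),
                (4 * π * t) ^ (-d / 2) * exp (-(r ^ 2 / (4 * t))) * μ t) ∧
        (∫ t in Ioi (0 : ℝ),
            (4 * π * t) ^ (-d / 2) * exp (-(r ^ 2 / (4 * t))) * μ t)
          ≤ c₂ * r ^ (-d - 2) * φ' ((r ^ 2)⁻¹) := by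
  have hμ : IsDecreasingLevyDensity μ := ⟨hμnonneg, fun _ hs _ _ ↦ hμdec _ _ hs, hμint⟩
  have hφ' : EqOn φ' (laplaceExponentDeriv μ) (Ioi 0) := hμ.eqOn_laplaceExponentDeriv hφ hderiv
  obtain ⟨σ', hσ', δ', hδ', hlow⟩ : ∃ σ' > 0, ∃ δ' < 1 + d / 2,
      HasLowerScaling (laplaceExponentDeriv μ) σ' δ' lam₀ := by
    rcases le_or_gt d 2 with h | h
    · obtain ⟨σ', hσ', δ', hδ', hlow⟩ := hB h
      exact ⟨σ', hσ', δ', hδ', hlow.congr hlam₀ hφ'⟩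
    · exact ⟨1, one_pos, 2, by linarith, hasLowerScaling_two_of_monotoneOn_sq_mul
        hμ.monotoneOn_sq_mul_laplaceExponentDeriv hlam₀⟩
  obtain ⟨c, hc, R₀, hR₀, hlower⟩ :=
    hμ.exists_le_heatMixture (hA3.congr hlam₀ hφ') hσ hδ hlam₀ (by positivity : 0 ≤ d / 2)
  obtain ⟨C, hC, hupper⟩ := hμ.exists_heatMixture_le hlow hσ' hlam₀ (hφ' hlam₀ ▸ hφ'pos)
    (by positivity : 0 ≤ d / 2) (by linarith)
  refine ⟨(4 * π) ^ (-d / 2) * c, by positivity, (4 * π) ^ (-d / 2) * C, by positivity,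
    min (1 / 2) (min R₀ lam₀⁻¹), ⟨by positivity, ?_⟩, fun r hr hrr ↦ ?_⟩
  · exact (min_le_left _ _).trans_lt (by norm_num)
  simp only [lt_min_iff] at hrr
  obtain ⟨hr_half, hrR₀, hrlam₀⟩ := hrr
  have hR : 0 < r ^ 2 := by positivity
  have hRr : r ^ 2 ≤ r := by nlinarith
  have hpow : r ^ (-d - 2) = (r ^ 2) ^ (-(d / 2) - 1) := by
    rw [← rpow_two, ← rpow_mul hr.le]; ring_nf
  rw [integral_heatKernel_mul_eq_heatMixture, hpow, hφ' (inv_pos.2 hR)]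
  simp only [mul_assoc ((4 * π) ^ (-d / 2))]
  constructor <;> gcongr
  · exact hlower _ ⟨hR, hRr.trans hrR₀.le⟩
  · exact hupper _ ⟨hR, hRr.trans hrlam₀.le⟩

/-- Under (A-2) (decreasing Lévy density `μ`), (A-3), and,
for `d ≤ 2`, condition (B), the radial Lévy density
`j(r) = ∫₀^∞ (4πt)^{−d/2} e^{−r²/(4t)} μ(t) dt` of the subordinate Brownian
motion satisfies `j(r) ≍ r^{−d−2} φ'(r^{−2})` as `r → 0+`. -/
theorem stmt_7 (d : ℕ) (hd : 1 ≤ d) (μ φ φ' : ℝ → ℝ) (σ lam₀ δ : ℝ)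
    (hμpos : ∀ t : ℝ, 0 < t → 0 < μ t)
    (hμdec : ∀ s t : ℝ, 0 < s → s ≤ t → μ t ≤ μ s)
    (hμint : IntegrableOn (fun t => min 1 t * μ t) (Ioi 0))
    (hφ : ∀ l : ℝ, 0 < l →
      φ l = ∫ t in Ioi (0:ℝ), (1 - Real.exp (-(l * t))) * μ t)
    (hderiv : ∀ l : ℝ, 0 < l → HasDerivAt φ (φ' l) l)
    (hφ'pos : ∀ l : ℝ, 0 < l → 0 < φ' l)
    (hφ'dec : ∀ s t : ℝ, 0 < s → s ≤ t → φ' t ≤ φ' s)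
    (hη₁ : ∀ s t : ℝ, 0 < s → s ≤ t → s ^ 2 * φ' s ≤ t ^ 2 * φ' t)
    (hσ : 0 < σ) (hlam₀ : 0 < lam₀) (hδ0 : 0 < δ) (hδ1 : δ ≤ 1)
    (hA3 : ∀ x : ℝ, 1 ≤ x → ∀ l : ℝ, lam₀ ≤ l →
      φ' (l * x) ≤ σ * x ^ (-δ) * φ' l)
    (hB : d ≤ 2 → 0 < (d : ℝ) + 2 * δ - 2 ∧
      ∃ σ' : ℝ, 0 < σ' ∧ ∃ δ' : ℝ,
        1 - (d : ℝ) / 2 < δ' ∧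
        δ' < min (1 + (d : ℝ) / 2) (2 * δ + ((d : ℝ) - 2) / 2) ∧
        ∀ x : ℝ, 1 ≤ x → ∀ l : ℝ, lam₀ ≤ l →
          σ' * x ^ (-δ') * φ' l ≤ φ' (l * x)) :
    ∃ c₁ : ℝ, 0 < c₁ ∧ ∃ c₂ : ℝ, 0 < c₂ ∧ ∃ r₀ : ℝ, r₀ ∈ Ioo (0:ℝ) 1 ∧
      ∀ r : ℝ, 0 < r → r < r₀ →
        c₁ * r ^ (-(d : ℝ) - 2) * φ' ((r ^ 2)⁻¹)
            ≤ (∫ t in Ioi (0:ℝ),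
                (4 * π * t) ^ (-(d : ℝ) / 2) * Real.exp (-(r ^ 2 / (4 * t))) * μ t) ∧
        (∫ t in Ioi (0:ℝ),
            (4 * π * t) ^ (-(d : ℝ) / 2) * Real.exp (-(r ^ 2 / (4 * t))) * μ t)
          ≤ c₂ * r ^ (-(d : ℝ) - 2) * φ' ((r ^ 2)⁻¹) := by
  exact stmt_7_general d.cast_nonneg (fun t ht ↦ (hμpos t ht).le) hμdec hμint hφ hderiv hlam₀
    (hφ'pos _ hlam₀) hσ hδ0 hA3 fun h ↦
      let ⟨_, σ', hσ', δ', _, hδ', hlow⟩ := hB (mod_cast h)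
      ⟨σ', hσ', δ', hδ'.trans_le (min_le_left _ _), hlow⟩
end

section
/- Let d ≥ 1 be an integer, let φ : (0,∞) → (0,∞) and let u : (0,∞) → (0,∞) be measurable with ∫₀^∞ e^{−λt} u(t) dt = 1/φ(λ) for all λ > 0. If ∫₀^R λ^{d/2 − 1}/φ(λ) dλ < ∞ for some R > 0, then ∫₁^∞ t^{−d/2} u(t) dt < ∞. -/
open MeasureTheory Real Set

/-!
Write `γ(s, r) = ∫₀^r x^(s-1) e^(-x) dx`. Tonelli's theorem turns `∫₀^R λ^(s-1) (ℒu)(λ) dλ` into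
the integral of `u` against `t ↦ ∫₀^R λ^(s-1) e^(-λt) dλ`, which is `t^(-s) γ(s, Rt)` by the
substitution `x = λt`. For `t ≥ a` this weight is at least `γ(s, Ra) t^(-s)`, and `γ(s, Ra) > 0`.
-/

open scoped ENNReal

/-- The lower incomplete Gamma function `γ(s, r) = ∫₀^r x^(s-1) e^(-x) dx`. Values are taken in
`[0, ∞]`, so that it is meaningful (and infinite, for `r > 0`) when `s ≤ 0` too. -/
noncomputable def lowerIncompleteGamma (s r : ℝ) : ℝ≥0∞ :=
  ∫⁻ x in Ioo 0 r, ENNReal.ofReal (x ^ (s - 1)) * ENNReal.ofReal (exp (-x))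

theorem lowerIncompleteGamma_mono (s : ℝ) : Monotone (lowerIncompleteGamma s) :=
  fun _ _ h ↦ lintegral_mono_set (Ioo_subset_Ioo_right h)

theorem lowerIncompleteGamma_pos (s : ℝ) {r : ℝ} (hr : 0 < r) : 0 < lowerIncompleteGamma s r := by
  rw [lowerIncompleteGamma, setLIntegral_pos_iff (by fun_prop)]
  have hsupp : Ioo 0 r ⊆ (Function.support fun x : ℝ ↦
      ENNReal.ofReal (x ^ (s - 1)) * ENNReal.ofReal (exp (-x))) ∩ Ioo 0 r := fun x hx ↦
    ⟨(ENNReal.mul_pos (ENNReal.ofReal_pos.2 (rpow_pos_of_pos hx.1 _)).ne'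
      (ENNReal.ofReal_pos.2 (exp_pos _)).ne').ne', hx⟩
  exact (isOpen_Ioo.measure_pos volume (nonempty_Ioo.2 hr)).trans_le (measure_mono hsupp)

theorem setLIntegral_rpow_mul_exp_neg_mul (s R : ℝ) {t : ℝ} (ht : 0 < t) :
    ∫⁻ l in Ioo 0 R, ENNReal.ofReal (l ^ (s - 1)) * ENNReal.ofReal (exp (-(l * t))) =
      ENNReal.ofReal (t ^ (-s)) * lowerIncompleteGamma s (R * t) := by
  have himage : (· * t) '' Ioo 0 R = Ioo 0 (R * t) := by
    rw [image_mul_right_Ioo _ _ ht, zero_mul]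
  rw [lowerIncompleteGamma, ← himage, lintegral_image_eq_lintegral_abs_deriv_mul measurableSet_Ioo
    (fun x _ ↦ (hasDerivAt_mul_const t).hasDerivWithinAt) (mul_left_injective₀ ht.ne').injOn,
    ← lintegral_const_mul _ (by fun_prop)]
  refine setLIntegral_congr_fun measurableSet_Ioo fun l hl ↦ ?_
  have hscale : l ^ (s - 1) = t ^ (-s) * (t * (l * t) ^ (s - 1)) := by
    rw [mul_rpow hl.1.le ht.le, rpow_sub_one ht.ne', rpow_neg ht.le]
    have := (rpow_pos_of_pos ht s).ne'
    field_simp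
  rw [abs_of_pos ht, hscale, ENNReal.ofReal_mul (by positivity), ENNReal.ofReal_mul ht.le,
    mul_assoc, mul_assoc]

theorem setLIntegral_rpow_mul_lintegral_exp_neg_mul (s R : ℝ) {μ : Measure ℝ} [SFinite μ]
    {f : ℝ → ℝ≥0∞} (hf : AEMeasurable f μ) :
    ∫⁻ l in Ioo 0 R, ENNReal.ofReal (l ^ (s - 1)) *
        ∫⁻ t, ENNReal.ofReal (exp (-(l * t))) * f t ∂μ =
      ∫⁻ t, (∫⁻ l in Ioo 0 R,
        ENNReal.ofReal (l ^ (s - 1)) * ENNReal.ofReal (exp (-(l * t)))) * f t ∂μ := by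
  have hkernel : AEMeasurable (Function.uncurry fun l t : ℝ ↦ ENNReal.ofReal (l ^ (s - 1)) *
      ENNReal.ofReal (exp (-(l * t))) * f t) ((volume.restrict (Ioo 0 R)).prod μ) :=
    AEMeasurable.mul (by fun_prop) hf.comp_snd
  calc
    _ = ∫⁻ l in Ioo 0 R, ∫⁻ t,
          ENNReal.ofReal (l ^ (s - 1)) * ENNReal.ofReal (exp (-(l * t))) * f t ∂μ := by
      simp only [mul_assoc, lintegral_const_mul' _ _ ENNReal.ofReal_ne_top]
    _ = ∫⁻ t, (∫⁻ l in Ioo 0 R,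
          ENNReal.ofReal (l ^ (s - 1)) * ENNReal.ofReal (exp (-(l * t))) * f t) ∂μ :=
      lintegral_lintegral_swap hkernel
    _ = _ := lintegral_congr fun t ↦ lintegral_mul_const _ (by fun_prop)

theorem lowerIncompleteGamma_mul_setLIntegral_rpow_neg_le (s : ℝ) {R a : ℝ} (hR : 0 ≤ R)
    (ha : 0 ≤ a) {μ : Measure ℝ} [SFinite μ] {f : ℝ → ℝ≥0∞}
    (hf : AEMeasurable f (μ.restrict (Ioi a))) :
    lowerIncompleteGamma s (R * a) * ∫⁻ t in Ioi a, ENNReal.ofReal (t ^ (-s)) * f t ∂μ ≤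
      ∫⁻ l in Ioo 0 R, ENNReal.ofReal (l ^ (s - 1)) *
        ∫⁻ t in Ioi a, ENNReal.ofReal (exp (-(l * t))) * f t ∂μ := by
  rw [setLIntegral_rpow_mul_lintegral_exp_neg_mul s R hf]
  refine (lintegral_const_mul_le _ _).trans
    (setLIntegral_mono' measurableSet_Ioi fun t (hat : a < t) ↦ ?_)
  rw [setLIntegral_rpow_mul_exp_neg_mul s R (ha.trans_lt hat), ← mul_assoc,
    mul_comm (lowerIncompleteGamma _ _)]
  gcongr
  exact lowerIncompleteGamma_mono s (by gcongr)

theorem aestronglyMeasurable_of_exp_neg_mul {μ : Measure ℝ} {u : ℝ → ℝ} {l : ℝ}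
    (h : AEStronglyMeasurable (fun t ↦ exp (-(l * t)) * u t) μ) : AEStronglyMeasurable u μ := by
  have hexp : AEStronglyMeasurable (fun t ↦ exp (l * t)) μ := by fun_prop
  refine (hexp.mul h).congr (.of_forall fun t ↦ ?_)
  simp only [Pi.mul_apply, ← mul_assoc, ← exp_add, add_neg_cancel, exp_zero, one_mul]

theorem lintegral_exp_neg_mul_eq_ofReal_integral {μ : Measure ℝ} {u : ℝ → ℝ} {l : ℝ}
    (hu : 0 ≤ᵐ[μ] u) (h : Integrable (fun t ↦ exp (-(l * t)) * u t) μ) :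
    ∫⁻ t, ENNReal.ofReal (exp (-(l * t))) * ENNReal.ofReal (u t) ∂μ =
      ENNReal.ofReal (∫ t, exp (-(l * t)) * u t ∂μ) := by
  rw [ofReal_integral_eq_lintegral_ofReal h
    (hu.mono fun t ht ↦ mul_nonneg (exp_pos _).le ht)]
  simp only [ENNReal.ofReal_mul (exp_pos _).le]

theorem integrableOn_rpow_neg_mul_of_integrableOn_laplace {μ : Measure ℝ} [SFinite μ] (s : ℝ)
    {u : ℝ → ℝ} {R a : ℝ} (hR : 0 < R) (ha : 0 < a) (hu : 0 ≤ᵐ[μ.restrict (Ioi 0)] u)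
    (hlap : ∀ l ∈ Ioo 0 R, IntegrableOn (fun t ↦ exp (-(l * t)) * u t) (Ioi 0) μ)
    (hfin : IntegrableOn
      (fun l ↦ l ^ (s - 1) * ∫ t in Ioi 0, exp (-(l * t)) * u t ∂μ) (Ioo 0 R)) :
    IntegrableOn (fun t ↦ t ^ (-s) * u t) (Ioi a) μ := by
  have hsub : Ioi a ⊆ Ioi 0 := Ioi_subset_Ioi ha.le
  obtain ⟨l₀, hl₀⟩ := nonempty_Ioo.2 hR
  have humeas : AEStronglyMeasurable u (μ.restrict (Ioi a)) :=
    (aestronglyMeasurable_of_exp_neg_mul (hlap l₀ hl₀).aestronglyMeasurable).mono_set hsub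
  have hbound : lowerIncompleteGamma s (R * a) *
      ∫⁻ t in Ioi a, ENNReal.ofReal (t ^ (-s)) * ENNReal.ofReal (u t) ∂μ < ∞ := calc
    _ ≤ ∫⁻ l in Ioo 0 R, ENNReal.ofReal (l ^ (s - 1)) *
          ∫⁻ t in Ioi a, ENNReal.ofReal (exp (-(l * t))) * ENNReal.ofReal (u t) ∂μ :=
      lowerIncompleteGamma_mul_setLIntegral_rpow_neg_le s hR.le ha.le
        humeas.aemeasurable.ennreal_ofReal
    _ ≤ ∫⁻ l in Ioo 0 R, ENNReal.ofReal
          (l ^ (s - 1) * ∫ t in Ioi 0, exp (-(l * t)) * u t ∂μ) := by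
      refine setLIntegral_mono' measurableSet_Ioo fun l hl ↦ ?_
      rw [ENNReal.ofReal_mul (rpow_nonneg hl.1.le _),
        ← lintegral_exp_neg_mul_eq_ofReal_integral hu (hlap l hl)]
      gcongr
    _ < ∞ := hfin.setLIntegral_lt_top
  have hrpow_nonneg : ∀ᵐ t ∂μ.restrict (Ioi a), 0 ≤ t ^ (-s) :=
    ae_restrict_of_forall_mem measurableSet_Ioi fun t ht ↦ rpow_nonneg (hsub ht).le _
  have hprod_nonneg : 0 ≤ᵐ[μ.restrict (Ioi a)] fun t ↦ t ^ (-s) * u t := by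
    filter_upwards [hrpow_nonneg, ae_restrict_of_ae_restrict_of_subset hsub hu] with t ht hut
    exact mul_nonneg ht hut
  refine ⟨AEStronglyMeasurable.mul (by fun_prop) humeas, ?_⟩
  rw [hasFiniteIntegral_iff_ofReal hprod_nonneg,
    lintegral_congr_ae (hrpow_nonneg.mono fun t ht ↦ ENNReal.ofReal_mul ht)]
  exact ENNReal.lt_top_of_mul_ne_top_right hbound.ne
    (lowerIncompleteGamma_pos s (mul_pos hR ha)).ne'

theorem stmt_8_general {μ : Measure ℝ} [SFinite μ] (s : ℝ) {φ u : ℝ → ℝ} {R a : ℝ} (hR : 0 < R)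
    (ha : 0 < a) (hφ : ∀ l ∈ Ioo 0 R, φ l ≠ 0) (hu : 0 ≤ᵐ[μ.restrict (Ioi 0)] u)
    (hlap : ∀ l ∈ Ioo 0 R, ∫ t in Ioi 0, exp (-(l * t)) * u t ∂μ = 1 / φ l)
    (hfin : IntegrableOn (fun l ↦ l ^ (s - 1) / φ l) (Ioo 0 R)) :
    IntegrableOn (fun t ↦ t ^ (-s) * u t) (Ioi a) μ := by
  refine integrableOn_rpow_neg_mul_of_integrableOn_laplace s hR ha hu
    (fun l hl ↦ .of_integral_ne_zero (hlap l hl ▸ one_div_ne_zero (hφ l hl)))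
    (hfin.congr_fun (fun l hl ↦ ?_) measurableSet_Ioo)
  simp only [hlap l hl, mul_one_div]

/-- If `u : (0,∞) → (0,∞)` is measurable with Laplace transform
`∫₀^∞ e^{−λt} u(t) dt = 1/φ(λ)` for all `λ > 0`, and
`∫₀^R λ^{d/2−1}/φ(λ) dλ < ∞` for some `R > 0` (Chung–Fuchs transience
criterion), then `∫₁^∞ t^{−d/2} u(t) dt < ∞`. -/
theorem stmt_8 (d : ℕ) (hd : 1 ≤ d) (φ u : ℝ → ℝ)
    (hφpos : ∀ l : ℝ, 0 < l → 0 < φ l)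
    (hupos : ∀ t : ℝ, 0 < t → 0 < u t)
    (humeas : Measurable u)
    (hlap : ∀ l : ℝ, 0 < l →
      (∫ t in Ioi (0:ℝ), Real.exp (-(l * t)) * u t) = 1 / φ l)
    (R : ℝ) (hR : 0 < R)
    (hfin : IntegrableOn (fun l => l ^ ((d : ℝ) / 2 - 1) / φ l) (Ioo 0 R)) :
    IntegrableOn (fun t => t ^ (-(d : ℝ) / 2) * u t) (Ioi 1) := by
  simpa only [neg_div] using stmt_8_general (d / 2) hR one_pos (fun l hl ↦ (hφpos l hl.1).ne')
    (ae_restrict_of_forall_mem measurableSet_Ioi fun t ht ↦ (hupos t ht).le)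
    (fun l hl ↦ hlap l hl.1) hfin
end
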